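/- arXiv:2604.13894 — 4 statements merged into one kernel-verified Lean document; each statement's English description precedes it below -/
import Mathlib

section
/- Let H = Σ_{k=1}^d h_k P_k and let S be a bounded operator on ℋ belonging to the bicommutant of H, i.e. S commutes with every bounded operator that commutes with H. Then for every ε ∈ [0,1] with ε ≤ η/(vρ) and every t ∈ ℝ, ‖e^{it(H+εV(ε))} S e^{−it(H+εV(ε))} − S‖ ≤ β (v/η) ‖S‖ ε. -/
open scoped BigOperators

open Metric

/-!
Since the operators `P k * T * P k` commute with `H`, an element `S` of the bicommutant has the form
`∑ s k • P k`. Choose a smooth `g : ℝ → ℂ` which equals `s k` near `h k` and satisfies `|g| ≤ ‖S‖`.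
For a self-adjoint perturbation `a` of `H`, the operator `g(a)` commutes with `exp(ita)`, so
conjugation by `exp(ita)` moves `S` by at most `2 ‖g(a) - S‖`. With the divided difference
`q k x = (g x - s k) / (x - h k)` one has
`P k (g(a) - S) = P k (a - h k) (q k)(a) = P k (a - H) (q k)(a)`,
and orthogonality of the `P k` gives `‖g(a) - S‖ ≤ ‖a - H‖ sup_x (∑ |q k x| ^ 2) ^ (1 / 2)`.
Because the points `h k` are `η`-separated, this supremum is controlled by `∑ n ^ (-2) = π ^ 2 / 6`.
-/

section SeparatedPoints

variable {ι : Type*}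

lemma injOn_natFloor_of_one_le_abs_sub {s : Set ι} {y : ι → ℝ} (hy : ∀ k ∈ s, 0 ≤ y k)
    (hsep : s.Pairwise fun k l => 1 ≤ |y k - y l|) : s.InjOn fun k => ⌊y k⌋₊ := by
  refine fun k hk l hl hkl => hsep.eq hk hl (not_le.mpr ?_)
  refine Int.abs_sub_lt_one_of_floor_eq_floor ?_
  rw [← Int.natCast_floor_eq_floor (hy k hk), ← Int.natCast_floor_eq_floor (hy l hl)]
  exact congrArg _ hkl

lemma sum_comp_le_of_hasSum_of_injOn {κ : Type*} {f : κ → ℝ} {a : ℝ} (hf : HasSum f a)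
    (hf0 : ∀ i, 0 ≤ f i) {s : Finset ι} {n : ι → κ} (hn : Set.InjOn n s) :
    ∑ k ∈ s, f (n k) ≤ a := by
  classical
  rw [← Finset.sum_image hn]
  exact sum_le_hasSum _ (fun i _ => hf0 i) hf

lemma sum_comp_natFloor_abs_sub_div_le [Fintype ι] {f : ℕ → ℝ} {a : ℝ} (hf : HasSum f a)
    (hf0 : ∀ n, 0 ≤ f n) {η : ℝ} (hη : 0 < η) {h : ι → ℝ}
    (hsep : Pairwise fun k l => η ≤ |h k - h l|) (x : ℝ) :
    ∑ k, f ⌊|x - h k| / η⌋₊ ≤ 2 * a := by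
  classical
  -- On either side of `x` the floors are pairwise distinct, so each value occurs at most twice.
  have sum_side_le (s : Finset ι)
      (hs : ∀ k ∈ s, ∀ l ∈ s, |h k - h l| = |(|x - h k| - |x - h l|)|) :
      ∑ k ∈ s, f ⌊|x - h k| / η⌋₊ ≤ a := by
    refine sum_comp_le_of_hasSum_of_injOn hf hf0
      (injOn_natFloor_of_one_le_abs_sub (fun k _ => by positivity) fun k hk l hl hkl => ?_)
    change 1 ≤ |(|x - h k| / η - |x - h l| / η)|
    rw [← sub_div, abs_div, abs_of_pos hη, one_le_div hη, ← hs k hk l hl]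
    exact hsep hkl
  rw [← Finset.sum_filter_add_sum_filter_not Finset.univ (fun k => h k ≤ x), two_mul]
  refine add_le_add (sum_side_le _ fun k hk l hl => ?_) (sum_side_le _ fun k hk l hl => ?_) <;>
    simp only [Finset.mem_filter, Finset.mem_univ, true_and, not_le] at hk hl
  · rw [abs_of_nonneg (sub_nonneg.mpr hk), abs_of_nonneg (sub_nonneg.mpr hl), abs_sub_comm]
    congr 1
    ring
  · rw [abs_of_neg (sub_neg.mpr hk), abs_of_neg (sub_neg.mpr hl)]
    congr 1
    ring

lemma sum_inv_max_sq_le [Fintype ι] {η : ℝ} (hη : 0 < η) {h : ι → ℝ}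
    (hsep : Pairwise fun k l => η ≤ |h k - h l|) {r : ℝ} (hr : 0 < r) (x : ℝ) :
    ∑ k, (max r |x - h k|)⁻¹ ^ 2 ≤ 2 * (r⁻¹ ^ 2 + η⁻¹ ^ 2 * (Real.pi ^ 2 / 6)) := by
  -- At `n = 0` the second summand vanishes because `1 / 0 = 0`.
  let f : ℕ → ℝ := fun n => (Pi.single 0 (r⁻¹ ^ 2) : ℕ → ℝ) n + η⁻¹ ^ 2 * (1 / (n : ℝ) ^ 2)
  have hf : HasSum f (r⁻¹ ^ 2 + η⁻¹ ^ 2 * (Real.pi ^ 2 / 6)) :=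
    (hasSum_pi_single (0 : ℕ) (r⁻¹ ^ 2)).add (hasSum_zeta_two.mul_left _)
  have single_nonneg : (0 : ℕ → ℝ) ≤ Pi.single 0 (r⁻¹ ^ 2) := Pi.single_nonneg.mpr (by positivity)
  have hf0 (n : ℕ) : 0 ≤ f n := add_nonneg (single_nonneg n) (by positivity)
  refine le_trans (Finset.sum_le_sum fun k _ => ?_)
    (sum_comp_natFloor_abs_sub_div_le hf hf0 hη hsep x)
  rcases Nat.eq_zero_or_pos ⌊|x - h k| / η⌋₊ with hn | hn
  · rw [hn]
    simp only [f, Pi.single_eq_same, Nat.cast_zero, zero_pow two_ne_zero, div_zero, mul_zero,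
      add_zero]
    gcongr
    exact le_max_left _ _
  · have floor_mul_le : η * ⌊|x - h k| / η⌋₊ ≤ max r |x - h k| :=
      calc η * ⌊|x - h k| / η⌋₊ ≤ η * (|x - h k| / η) := by
            gcongr
            exact Nat.floor_le (by positivity)
        _ = |x - h k| := mul_div_cancel₀ _ hη.ne'
        _ ≤ max r |x - h k| := le_max_right _ _
    simp only [f, Pi.single_eq_of_ne hn.ne', zero_add, one_div, ← inv_pow, ← mul_pow, ← mul_inv]
    gcongr

lemma exists_contDiff_norm_le_eqOn_closedBall [Finite ι] {E F : Type*} [NormedAddCommGroup E]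
    [NormedSpace ℝ E] [HasContDiffBump E] [NormedAddCommGroup F] [NormedSpace ℝ F] {η : ℝ}
    {c : ι → E} (hsep : Pairwise fun k l => η ≤ dist (c k) (c l)) {r : ℝ} (hr : 0 < r)
    (hrη : r < η / 2) {s : ι → F} {M : ℝ} (hM : 0 ≤ M) (hs : ∀ k, ‖s k‖ ≤ M) :
    ∃ g : E → F, ContDiff ℝ 1 g ∧ (∀ x, ‖g x‖ ≤ M) ∧
      ∀ k, Set.EqOn g (fun _ => s k) (closedBall (c k) r) := by
  classical
  have := Fintype.ofFinite ι
  let bump (k : ι) : ContDiffBump (c k) := ⟨r, η / 2, hr, hrη⟩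
  let g : E → F := fun x => ∑ k, bump k x • s k
  have g_eq {x : E} {k : ι} (hx : dist x (c k) < η / 2) : g x = bump k x • s k := by
    refine Finset.sum_eq_single k (fun l _ hlk => ?_) (by simp)
    have hl : η / 2 ≤ dist x (c l) := by
      linarith [hsep hlk.symm, dist_triangle_left (c k) (c l) x]
    rw [(bump l).zero_of_le_dist hl, zero_smul]
  refine ⟨g, ContDiff.sum fun k _ => (bump k).contDiff.smul contDiff_const, fun x => ?_,
    fun k x hx => ?_⟩
  · by_cases hx : ∃ k, dist x (c k) < η / 2
    · obtain ⟨k, hk⟩ := hx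
      rw [g_eq hk, norm_smul, Real.norm_of_nonneg (bump k).nonneg]
      exact (mul_le_of_le_one_left (norm_nonneg _) (bump k).le_one).trans (hs k)
    · push Not at hx
      have : g x = 0 := Finset.sum_eq_zero fun k _ => by
        rw [(bump k).zero_of_le_dist (hx k), zero_smul]
      rwa [this, norm_zero]
  · rw [g_eq ((mem_closedBall.mp hx).trans_lt hrη), (bump k).one_of_mem_closedBall hx, one_smul]

end SeparatedPoints

section DSlope

lemma continuous_dslope {𝕜 E : Type*} [NontriviallyNormedField 𝕜] [NormedAddCommGroup E]
    [NormedSpace 𝕜 E] {f : 𝕜 → E} {a : 𝕜} (hf : Continuous f) (hfa : DifferentiableAt 𝕜 f a) :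
    Continuous (dslope f a) := by
  rw [← continuousOn_univ, continuousOn_dslope Filter.univ_mem]
  exact ⟨hf.continuousOn, hfa⟩

lemma norm_dslope_le_of_eqOn_closedBall {E : Type*} [NormedAddCommGroup E] [NormedSpace ℝ E]
    {f : ℝ → E} {a r M : ℝ} (hr : 0 < r) (hM : ∀ x, ‖f x‖ ≤ M)
    (hf : Set.EqOn f (fun _ => f a) (closedBall a r)) (x : ℝ) :
    ‖dslope f a x‖ ≤ 2 * M * (max r |x - a|)⁻¹ := by
  have hM0 : 0 ≤ M := (norm_nonneg _).trans (hM 0)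
  rcases eq_or_ne x a with rfl | hxa
  · have : deriv f x = 0 := by
      rw [(hf.eventuallyEq_of_mem (closedBall_mem_nhds x hr)).deriv_eq, deriv_const]
    rw [dslope_same, this, norm_zero]
    positivity
  rw [dslope_of_ne _ hxa, slope_def_module, norm_smul, norm_inv, Real.norm_eq_abs]
  rcases le_or_gt |x - a| r with hxr | hxr
  · rw [hf (mem_closedBall.mpr hxr), sub_self, norm_zero, mul_zero]
    positivity
  · rw [max_eq_right hxr.le, mul_comm]
    gcongr
    calc ‖f x - f a‖ ≤ ‖f x‖ + ‖f a‖ := norm_sub_le _ _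
      _ ≤ 2 * M := by linarith [hM x, hM a]

end DSlope

section SpectralResolution

variable {ι R A : Type*} [Fintype ι] [CommSemiring R] [Semiring A] [Algebra R A] {P : ι → A}

lemma mul_sum_smul_of_orthogonalIdempotents (hP : OrthogonalIdempotents P) (c : ι → R) (k : ι) :
    P k * ∑ l, c l • P l = c k • P k := by
  classical
  simp [Finset.mul_sum, hP.mul_eq]

lemma sum_smul_mul_of_orthogonalIdempotents (hP : OrthogonalIdempotents P) (c : ι → R) (k : ι) :
    (∑ l, c l • P l) * P k = c k • P k := by
  classical
  simp [Finset.sum_mul, hP.mul_eq]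

lemma commute_corner_sum_smul (hP : OrthogonalIdempotents P) (c : ι → R) (k : ι) (T : A) :
    Commute (P k * T * P k) (∑ l, c l • P l) := by
  rw [commute_iff_eq, mul_assoc, mul_sum_smul_of_orthogonalIdempotents hP, ← mul_assoc,
    ← mul_assoc, sum_smul_mul_of_orthogonalIdempotents hP, mul_smul_comm, smul_mul_assoc,
    smul_mul_assoc]

end SpectralResolution

section Bicommutant

variable {ι 𝕜 E : Type*} [Fintype ι] [RCLike 𝕜] [NormedAddCommGroup E] [NormedSpace 𝕜 E]

lemma exists_mul_eq_smul_of_commute_corner {P S : E →L[𝕜] E} (hP : IsIdempotentElem P)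
    (hS : ∀ T, Commute S (P * T * P)) : ∃ c : 𝕜, ‖c‖ ≤ ‖S‖ ∧ S * P = c • P := by
  rcases eq_or_ne P 0 with rfl | hP0
  · exact ⟨0, by simp, by simp⟩
  obtain ⟨u, hu⟩ : ∃ u, P u ≠ 0 := by
    contrapose! hP0
    exact ContinuousLinearMap.ext hP0
  have hPP (x : E) : P (P x) = P x := congr($hP x)
  obtain ⟨f, hf⟩ := SeparatingDual.exists_eq_one (R := 𝕜) hu
  have hSP : S * P = f (P (S (P u))) • P := by
    ext x
    simpa [hPP, hf] using congr($(hS (f.smulRight x)) (P u))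
  refine ⟨_, le_of_mul_le_mul_right ?_ (norm_pos_iff.mpr hu), hSP⟩
  calc ‖f (P (S (P u)))‖ * ‖P u‖ = ‖S (P u)‖ := by
        rw [← norm_smul]
        exact congr(‖$hSP u‖).symm
    _ ≤ ‖S‖ * ‖P u‖ := S.le_opNorm _

lemma exists_eq_sum_smul_of_mem_bicommutant {P : ι → E →L[𝕜] E}
    (hP : CompleteOrthogonalIdempotents P) {h : ι → 𝕜} {S : E →L[𝕜] E}
    (hS : ∀ T, Commute T (∑ k, h k • P k) → Commute S T) :
    ∃ s : ι → 𝕜, (∀ k, ‖s k‖ ≤ ‖S‖) ∧ S = ∑ k, s k • P k := by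
  choose s hs hsP using fun k => exists_mul_eq_smul_of_commute_corner (hP.idem k) fun T =>
    hS _ (commute_corner_sum_smul hP.toOrthogonalIdempotents h k T)
  refine ⟨s, hs, ?_⟩
  rw [← mul_one S, ← hP.complete, Finset.mul_sum]
  exact Finset.sum_congr rfl fun k _ => hsP k

end Bicommutant

section CStarAlgebra

variable {ι A : Type*} [Fintype ι] [CStarAlgebra A] {P : ι → A}

lemma norm_sum_mul_mul_sq_le (hP : OrthogonalIdempotents P) (hPsa : ∀ k, IsSelfAdjoint (P k))
    (b : A) (T : ι → A) :
    ‖∑ k, P k * b * T k‖ ^ 2 ≤ ‖b‖ ^ 2 * ‖∑ k, star (T k) * T k‖ := by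
  classical
  let := CStarAlgebra.spectralOrder A
  have := CStarAlgebra.spectralOrderedRing A
  have norm_conj_le (k : ι) : ‖star b * P k * b‖ ≤ ‖b‖ ^ 2 :=
    calc ‖star b * P k * b‖ ≤ ‖star b‖ * ‖P k‖ * ‖b‖ := norm_mul₃_le
      _ ≤ ‖b‖ * 1 * ‖b‖ := by
          rw [norm_star]
          gcongr
          exact IsStarProjection.norm_le _ ⟨hP.idem k, hPsa k⟩
      _ = ‖b‖ ^ 2 := by ring
  have star_mul_self_eq : star (∑ k, P k * b * T k) * (∑ k, P k * b * T k) =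
      ∑ k, star (T k) * (star b * P k * b) * T k := by
    rw [star_sum, Finset.sum_mul]
    refine Finset.sum_congr rfl fun k _ => ?_
    have P_mul_sum : P k * ∑ l, P l * b * T l = P k * b * T k := by
      simp [Finset.mul_sum, ← mul_assoc, hP.mul_eq]
    calc star (P k * b * T k) * ∑ l, P l * b * T l
        = star (T k) * star b * (P k * ∑ l, P l * b * T l) := by
          simp only [star_mul, (hPsa k).star_eq, mul_assoc]
      _ = star (T k) * (star b * P k * b) * T k := by
          rw [P_mul_sum]
          simp only [mul_assoc]
  have star_mul_self_le : star (∑ k, P k * b * T k) * (∑ k, P k * b * T k) ≤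
      ‖b‖ ^ 2 • ∑ k, star (T k) * T k := by
    rw [star_mul_self_eq, Finset.smul_sum]
    refine Finset.sum_le_sum fun k _ => (CStarAlgebra.star_left_conjugate_le_norm_smul
      ((hPsa k).conjugate' b)).trans ?_
    exact smul_le_smul_of_nonneg_right (norm_conj_le k) (star_mul_self_nonneg _)
  calc ‖∑ k, P k * b * T k‖ ^ 2 = ‖star (∑ k, P k * b * T k) * (∑ k, P k * b * T k)‖ := by
        rw [CStarRing.norm_star_mul_self, sq]
    _ ≤ ‖‖b‖ ^ 2 • ∑ k, star (T k) * T k‖ :=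
        CStarAlgebra.norm_le_norm_of_nonneg_of_le (star_mul_self_nonneg _) star_mul_self_le
    _ = ‖b‖ ^ 2 * ‖∑ k, star (T k) * T k‖ := by
        rw [norm_smul, Real.norm_of_nonneg (by positivity)]

lemma norm_sum_star_cfc_mul_cfc_le (a : A) {q : ι → ℂ → ℂ}
    (hq : ∀ k, ContinuousOn (q k) (spectrum ℂ a)) {C : ℝ} (hC : 0 ≤ C)
    (hqC : ∀ z ∈ spectrum ℂ a, ∑ k, ‖q k z‖ ^ 2 ≤ C) :
    ‖∑ k, star (cfc (q k) a) * cfc (q k) a‖ ≤ C := by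
  have : ∑ k, star (cfc (q k) a) * cfc (q k) a = cfc (∑ k, fun z => star (q k z) * q k z) a := by
    rw [cfc_sum_univ (fun k z => star (q k z) * q k z) a fun k => (hq k).star.mul (hq k)]
    refine Finset.sum_congr rfl fun k _ => ?_
    rw [cfc_mul _ _ a (hq k).star (hq k), cfc_star]
  rw [this]
  refine norm_cfc_le hC fun z hz => ?_
  rw [Finset.sum_apply]
  refine (norm_sum_le _ _).trans (le_trans (le_of_eq ?_) (hqC z hz))
  simp [sq]

lemma cfc_sub_sum_smul_eq (hP : CompleteOrthogonalIdempotents P) (h s : ι → ℂ) (a : A)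
    [IsStarNormal a] {g : ℂ → ℂ} {q : ι → ℂ → ℂ} (hg : ContinuousOn g (spectrum ℂ a))
    (hq : ∀ k, ContinuousOn (q k) (spectrum ℂ a))
    (hgq : ∀ k, ∀ z ∈ spectrum ℂ a, g z - s k = (z - h k) * q k z) :
    cfc g a - ∑ k, s k • P k = ∑ k, P k * (a - ∑ l, h l • P l) * cfc (q k) a := by
  have cfc_factor (k : ι) : cfc g a - algebraMap ℂ A (s k) =
      (a - algebraMap ℂ A (h k)) * cfc (q k) a := by
    rw [← cfc_const (s k) a, ← cfc_sub g _ a, cfc_congr (hgq k), cfc_mul _ _ a, cfc_sub _ _ a,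
      cfc_id' ℂ a, cfc_const _ a]
  have mul_sub_sum (c : ι → ℂ) (b : A) (k : ι) :
      P k * (b - ∑ l, c l • P l) = P k * (b - algebraMap ℂ A (c k)) := by
    rw [mul_sub, mul_sub, mul_sum_smul_of_orthogonalIdempotents hP.toOrthogonalIdempotents,
      Algebra.algebraMap_eq_smul_one, mul_smul_comm, mul_one]
  rw [← one_mul (cfc g a - _), ← hP.complete, Finset.sum_mul]
  refine Finset.sum_congr rfl fun k _ => ?_
  rw [mul_sub_sum, mul_sub_sum, cfc_factor, mul_assoc]

theorem norm_cfc_sub_sum_smul_le (hP : CompleteOrthogonalIdempotents P)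
    (hPsa : ∀ k, IsSelfAdjoint (P k)) (h s : ι → ℂ) (a : A) [IsStarNormal a] {g : ℂ → ℂ}
    {q : ι → ℂ → ℂ} (hg : ContinuousOn g (spectrum ℂ a))
    (hq : ∀ k, ContinuousOn (q k) (spectrum ℂ a))
    (hgq : ∀ k, ∀ z ∈ spectrum ℂ a, g z - s k = (z - h k) * q k z) {K : ℝ} (hK : 0 ≤ K)
    (hqK : ∀ z ∈ spectrum ℂ a, ∑ k, ‖q k z‖ ^ 2 ≤ K ^ 2) :
    ‖cfc g a - ∑ k, s k • P k‖ ≤ K * ‖a - ∑ k, h k • P k‖ := by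
  refine le_of_sq_le_sq ?_ (by positivity)
  calc ‖cfc g a - ∑ k, s k • P k‖ ^ 2
      ≤ ‖a - ∑ k, h k • P k‖ ^ 2 * ‖∑ k, star (cfc (q k) a) * cfc (q k) a‖ := by
        rw [cfc_sub_sum_smul_eq hP h s a hg hq hgq]
        exact norm_sum_mul_mul_sq_le hP.toOrthogonalIdempotents hPsa _ _
    _ ≤ ‖a - ∑ k, h k • P k‖ ^ 2 * K ^ 2 := by
        gcongr
        exact norm_sum_star_cfc_mul_cfc_le a hq (sq_nonneg K) hqK
    _ = (K * ‖a - ∑ k, h k • P k‖) ^ 2 := by ring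

lemma norm_unitary_conj_sub_le {u : A} (hu : u ∈ unitary A) {b' : A} (hb' : Commute b' u) (b : A) :
    ‖u * b * star u - b‖ ≤ 2 * ‖b' - b‖ := by
  have conj_sub_eq : u * b * star u - b = (b' - b) - u * (b' - b) * star u := by
    rw [mul_sub, sub_mul, ← hb'.eq, mul_assoc b', Unitary.mul_star_self_of_mem hu]
    noncomm_ring
  calc ‖u * b * star u - b‖ ≤ ‖b' - b‖ + ‖u * (b' - b) * star u‖ := by
        rw [conj_sub_eq]
        exact norm_sub_le _ _
    _ = 2 * ‖b' - b‖ := by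
        rw [CStarRing.norm_mul_mem_unitary _ (Unitary.star_mem hu),
          CStarRing.norm_mem_unitary_mul _ hu, two_mul]

lemma norm_exp_conj_sub_le {a : A} (ha : IsSelfAdjoint a) {b' : A} (hb' : Commute b' a) (b : A)
    (t : ℝ) :
    ‖NormedSpace.exp ((Complex.I * t) • a) * b * NormedSpace.exp ((-(Complex.I * t)) • a) - b‖ ≤
      2 * ‖b' - b‖ := by
  let : NormedAlgebra ℚ A := .restrictScalars ℚ ℂ A
  have star_smul_eq : star ((Complex.I * t) • a) = (-(Complex.I * t)) • a := by
    simp [ha.star_eq]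
  have exp_mem_unitary : NormedSpace.exp ((Complex.I * t) • a) ∈ unitary A :=
    NormedSpace.exp_mem_unitary_of_mem_skewAdjoint <| by
      rw [skewAdjoint.mem_iff, star_smul_eq, neg_smul]
  rw [← star_smul_eq, ← NormedSpace.star_exp]
  exact norm_unitary_conj_sub_le exp_mem_unitary (hb'.smul_right _).exp_right b

end CStarAlgebra

section SpectralGap

lemma exists_interpolation_sum_norm_dslope_sq_le {ι E : Type*} [Fintype ι] [NormedAddCommGroup E]
    [NormedSpace ℝ E] {η : ℝ} (hη : 0 < η) {h : ι → ℝ}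
    (hsep : Pairwise fun k l => η ≤ |h k - h l|) {s : ι → E} {M : ℝ} (hM : 0 ≤ M)
    (hs : ∀ k, ‖s k‖ ≤ M) :
    ∃ g : ℝ → E, Differentiable ℝ g ∧ (∀ k, g (h k) = s k) ∧
      ∀ x, ∑ k, ‖dslope g (h k) x‖ ^ 2 ≤ (4 * Real.pi / √3 * (M / η)) ^ 2 := by
  -- A radius `r < η / 2` must satisfy `(η / r) ^ 2 + π ^ 2 / 6 ≤ 2 * π ^ 2 / 3`.
  let r := 5 / 11 * η
  have hr : 0 < r := by positivity
  have hrη : r < η / 2 := by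
    simp only [r]
    linarith
  obtain ⟨g, hg, hgM, hgs⟩ :=
    exists_contDiff_norm_le_eqOn_closedBall (c := h) hsep hr hrη hM hs
  have g_apply (k : ι) : g (h k) = s k := hgs k (mem_closedBall_self hr.le)
  refine ⟨g, hg.differentiable one_ne_zero, g_apply, fun x => ?_⟩
  calc ∑ k, ‖dslope g (h k) x‖ ^ 2 ≤ ∑ k, (2 * M * (max r |x - h k|)⁻¹) ^ 2 := by
        gcongr with k
        refine norm_dslope_le_of_eqOn_closedBall hr hgM ?_ x
        rw [g_apply]
        exact hgs k
    _ = (2 * M) ^ 2 * ∑ k, (max r |x - h k|)⁻¹ ^ 2 := by simp only [mul_pow, Finset.mul_sum]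
    _ ≤ (2 * M) ^ 2 * (2 * (r⁻¹ ^ 2 + η⁻¹ ^ 2 * (Real.pi ^ 2 / 6))) := by
        gcongr
        exact sum_inv_max_sq_le hη hsep hr x
    _ = (M / η) ^ 2 * (8 * ((11 / 5) ^ 2 + Real.pi ^ 2 / 6)) := by
        simp only [r]
        field
    _ ≤ (M / η) ^ 2 * (16 * Real.pi ^ 2 / 3) := by
        gcongr
        nlinarith [Real.pi_gt_d2]
    _ = (4 * Real.pi / √3 * (M / η)) ^ 2 := by
        rw [mul_pow, div_pow _ √3, Real.sq_sqrt zero_le_three]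
        ring

variable {ι A : Type*} [Fintype ι] [CStarAlgebra A] {P : ι → A}

theorem exists_commute_norm_sub_sum_smul_le (hP : CompleteOrthogonalIdempotents P)
    (hPsa : ∀ k, IsSelfAdjoint (P k)) {η : ℝ} (hη : 0 < η) {h : ι → ℝ}
    (hsep : Pairwise fun k l => η ≤ |h k - h l|) {s : ι → ℂ} {M : ℝ} (hM : 0 ≤ M)
    (hs : ∀ k, ‖s k‖ ≤ M) {a : A} (ha : IsSelfAdjoint a) :
    ∃ b, Commute b a ∧ ‖b - ∑ k, s k • P k‖ ≤
      4 * Real.pi / √3 * (M / η) * ‖a - ∑ k, (h k : ℂ) • P k‖ := by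
  obtain ⟨g, hg, hgs, hgK⟩ := exists_interpolation_sum_norm_dslope_sq_le hη hsep hM hs
  have := ha.isStarNormal
  have continuousOn_comp_re {f : ℝ → ℂ} (hf : Continuous f) :
      ContinuousOn (fun z : ℂ => f z.re) (spectrum ℂ a) :=
    (hf.comp Complex.continuous_re).continuousOn
  have cfc_commute : Commute (cfc (fun z : ℂ => g z.re) a) a := by
    simpa only [cfc_id ℂ a] using cfc_commute_cfc (fun z : ℂ => g z.re) id a
  refine ⟨_, cfc_commute, norm_cfc_sub_sum_smul_le hP hPsa _ s a
    (continuousOn_comp_re hg.continuous)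
    (fun k => continuousOn_comp_re (continuous_dslope hg.continuous (hg (h k))))
    (fun k z hz => ?_) (by positivity) fun z _ => hgK z.re⟩
  rw [← hgs k, ← sub_smul_dslope, Complex.real_smul, Complex.ofReal_sub,
    ← ha.mem_spectrum_eq_re hz]

theorem norm_exp_conj_sub_le_of_spectral_gap (hP : CompleteOrthogonalIdempotents P)
    (hPsa : ∀ k, IsSelfAdjoint (P k)) {η : ℝ} (hη : 0 < η) {h : ι → ℝ}
    (hsep : Pairwise fun k l => η ≤ |h k - h l|) {s : ι → ℂ} {M : ℝ} (hM : 0 ≤ M)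
    (hs : ∀ k, ‖s k‖ ≤ M) {a : A} (ha : IsSelfAdjoint a) (t : ℝ) :
    ‖NormedSpace.exp ((Complex.I * t) • a) * (∑ k, s k • P k) *
        NormedSpace.exp ((-(Complex.I * t)) • a) - ∑ k, s k • P k‖ ≤
      8 * Real.pi / √3 * (M / η) * ‖a - ∑ k, (h k : ℂ) • P k‖ := by
  obtain ⟨b, hba, hb⟩ := exists_commute_norm_sub_sum_smul_le hP hPsa hη hsep hM hs ha
  refine (norm_exp_conj_sub_le ha hba _ t).trans ?_
  linear_combination 2 * hb

end SpectralGap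

lemma eight_pi_div_sqrt_three_le {α : ℝ} (hα : 0 < α) :
    8 * Real.pi / √3 ≤ 16 * Real.pi * α / √3 * (Real.exp (1 / (2 * α)) - 1) :=
  calc 8 * Real.pi / √3 = 16 * Real.pi * α / √3 * (1 / (2 * α)) := by field
    _ ≤ 16 * Real.pi * α / √3 * (Real.exp (1 / (2 * α)) - 1) := by
        gcongr
        exact le_sub_iff_add_le.mpr (Real.add_one_le_exp _)

theorem stmt_0_general {ℋ ι : Type*} [NormedAddCommGroup ℋ] [InnerProductSpace ℂ ℋ]
    [CompleteSpace ℋ] [Fintype ι] {P : ι → ℋ →L[ℂ] ℋ} (hP : CompleteOrthogonalIdempotents P)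
    (hPsa : ∀ k, IsSelfAdjoint (P k)) {h : ι → ℝ} {η : ℝ} (hη : 0 < η)
    (hsep : Pairwise fun k l => η ≤ |h k - h l|) {H : ℋ →L[ℂ] ℋ}
    (hH : H = ∑ k, (h k : ℂ) • P k) {V : ℋ →L[ℂ] ℋ} (hV : IsSelfAdjoint V) {v : ℝ}
    (hVv : ‖V‖ ≤ v) {S : ℋ →L[ℂ] ℋ} (hS : ∀ T, Commute T H → Commute S T) {ε : ℝ} (hε : 0 ≤ ε)
    (t : ℝ) :
    ‖NormedSpace.exp ((Complex.I * t) • (H + (ε : ℂ) • V)) * S *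
        NormedSpace.exp ((-(Complex.I * t)) • (H + (ε : ℂ) • V)) - S‖ ≤
      8 * Real.pi / √3 * (v / η) * ‖S‖ * ε := by
  subst hH
  obtain ⟨s, hs, hSs⟩ := exists_eq_sum_smul_of_mem_bicommutant hP hS
  have isSelfAdjoint_real_smul (x : ℝ) {T : ℋ →L[ℂ] ℋ} (hT : IsSelfAdjoint T) :
      IsSelfAdjoint ((x : ℂ) • T) := .smul (Complex.conj_ofReal x) hT
  have perturbed_isSelfAdjoint : IsSelfAdjoint (∑ k, (h k : ℂ) • P k + (ε : ℂ) • V) :=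
    (isSelfAdjoint_sum _ fun k _ => isSelfAdjoint_real_smul _ (hPsa k)).add
      (isSelfAdjoint_real_smul ε hV)
  have norm_le_of_gap := norm_exp_conj_sub_le_of_spectral_gap hP hPsa hη hsep (norm_nonneg S) hs
    perturbed_isSelfAdjoint t
  rw [← hSs, add_sub_cancel_left, norm_smul, Complex.norm_of_nonneg hε] at norm_le_of_gap
  calc _ ≤ 8 * Real.pi / √3 * (‖S‖ / η) * (ε * ‖V‖) := norm_le_of_gap
    _ ≤ 8 * Real.pi / √3 * (‖S‖ / η) * (ε * v) := by gcongr
    _ = 8 * Real.pi / √3 * (v / η) * ‖S‖ * ε := by ring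

/-- Let `H = Σ_{k=1}^d h_k P_k` and let `S` be a bounded operator in the
bicommutant of `H` (i.e. `S` commutes with every bounded operator commuting
with `H`). Then for every `ε ∈ [0,1]` with `ε ≤ η/(vρ)` and every `t ∈ ℝ`,
`‖e^{it(H+εV(ε))} S e^{−it(H+εV(ε))} − S‖ ≤ β (v/η) ‖S‖ ε`. -/
theorem stmt_0 {ℋ : Type*} [NormedAddCommGroup ℋ] [InnerProductSpace ℂ ℋ]
    [CompleteSpace ℋ]
    (d : ℕ) (P : Fin d → ℋ →L[ℂ] ℋ) (h : Fin d → ℝ)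
    (hPsa : ∀ k, IsSelfAdjoint (P k))
    (hPidem : ∀ k, P k * P k = P k)
    (hPorth : ∀ k l, k ≠ l → P k * P l = 0)
    (hPsum : ∑ k, P k = 1)
    (hmono : StrictMono h)
    (η : ℝ) (hη : 0 < η)
    (hgap : ∀ k l, k ≠ l → η ≤ |h k - h l|)
    (H : ℋ →L[ℂ] ℋ) (hH : H = ∑ k, ((h k : ℂ)) • P k)
    (V : ℝ → ℋ →L[ℂ] ℋ)
    (hVsa : ∀ ε ∈ Set.Icc (0 : ℝ) 1, IsSelfAdjoint (V ε))
    (v : ℝ) (hv : 0 < v)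
    (hVbd : ∀ ε ∈ Set.Icc (0 : ℝ) 1, ‖V ε‖ ≤ v)
    (α β ρ : ℝ) (hα : 0 < α)
    (hαeq : (α + 1) * (Real.exp (2 / α) - 1) ≤ 3)
    (hβ : β = 16 * Real.pi * α / Real.sqrt 3 * (Real.exp (1 / (2 * α)) - 1))
    (hρ : ρ = 4 * Real.pi * α / Real.sqrt 3)
    (S : ℋ →L[ℂ] ℋ)
    (hS : ∀ T : ℋ →L[ℂ] ℋ, T * H = H * T → S * T = T * S)
    (ε : ℝ) (hε : ε ∈ Set.Icc (0 : ℝ) 1) (hε' : ε ≤ η / (v * ρ)) (t : ℝ) :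
    ‖NormedSpace.exp ((Complex.I * t) • (H + (ε : ℂ) • V ε)) * S *
        NormedSpace.exp ((-(Complex.I * t)) • (H + (ε : ℂ) • V ε)) - S‖ ≤
      β * (v / η) * ‖S‖ * ε := by
  refine (stmt_0_general ⟨⟨hPidem, hPorth⟩, hPsum⟩ hPsa hη hgap hH (hVsa ε hε) (hVbd ε hε) hS hε.1
    t).trans ?_
  gcongr
  exacts [hε.1, hβ ▸ eight_pi_div_sqrt_three_le hα]
end

section
/- Let H = Σ_{k=1}^d h_k P_k. Then there exists a family of bounded self-adjoint operators V̂(ε), ε ∈ [0,1], such that each V̂(ε) commutes with H, and for every ε ∈ [0,1] with ε ≤ η/(vρ) and every t ∈ ℝ, ‖e^{−it(H+εV(ε))} − e^{−it(H+εV̂(ε))}‖ ≤ (β/2)(v/η) ε (eternal block-diagonal approximation). -/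
open scoped BigOperators

/-!
Dividing the `(i, j)` block of an operator by `h i - h j` inverts the commutator with `H` off the
diagonal. As a block Schur multiplier it has norm at most `π / (√3 η)`, because the columns of its
symbol have square sum at most `2 ζ(2) / η²`. For a perturbation `W` that is small against `η`, the
contraction principle then solves the Bloch equation: there are a small off-diagonal `X` and a
block-diagonal `B` with `(H + W) Ω = Ω (H + B)`, where `Ω = 1 + X`. Comparing this identity with
its adjoint, `G = Ω⋆ Ω` solves a homogeneous Sylvester equation, whose solutions are block-diagonal.
Hence `U = Ω G ^ (-1/2)` is a unitary with `‖U - 1‖ ≤ 2 π ‖W‖ / (√3 η)` and `U⋆ (H + W) U` is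
block-diagonal. Conjugating a unitary group by `U` moves it by at most `2 ‖U - 1‖`, uniformly in
time.
-/

open scoped Matrix

section SchurMultiplier

variable {R A ι : Type*} [CommRing R] [Ring A] [Algebra R A] [Fintype ι] {P : ι → A}

/-- The block Schur multiplier with symbol `c`: it scales the `(i, j)` block `P i * a * P j` of `a`
by `c i j`. -/
def schurMultiplier (P : ι → A) (c : Matrix ι ι R) : A →ₗ[R] A :=
  ∑ i, ∑ j, c i j • LinearMap.mulLeftRight R (P i, P j)

lemma schurMultiplier_apply (c : Matrix ι ι R) (a : A) :
    schurMultiplier P c a = ∑ i, ∑ j, c i j • (P i * a * P j) := by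
  simp [schurMultiplier]

lemma schurMultiplier_eq_sum_mul (c : Matrix ι ι R) (a : A) :
    schurMultiplier P c a = ∑ i, P i * (a * ∑ j, c i j • P j) := by
  simp only [schurMultiplier_apply, Finset.mul_sum, mul_smul_comm, mul_assoc]

lemma schurMultiplier_sub_apply (c c' : Matrix ι ι R) (a : A) :
    schurMultiplier P (c - c') a = schurMultiplier P c a - schurMultiplier P c' a := by
  simp [schurMultiplier_apply, sub_smul]

lemma schurMultiplier_zero_apply (a : A) : schurMultiplier P (0 : Matrix ι ι R) a = 0 := by
  simp [schurMultiplier_apply]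

lemma mul_schurMultiplier_mul (hP : OrthogonalIdempotents P) (c : Matrix ι ι R) (a : A) (i j : ι) :
    P i * schurMultiplier P c a * P j = c i j • (P i * a * P j) := by
  classical
  have block (k l : ι) : P i * (c k l • (P k * a * P l)) * P j =
      if i = k then if l = j then c k l • (P i * a * P l) else 0 else 0 := by
    calc P i * (c k l • (P k * a * P l)) * P j
        = c k l • (P i * P k * a * (P l * P j)) := by
          simp only [mul_smul_comm, smul_mul_assoc, mul_assoc]
      _ = _ := by rw [hP.mul_eq, hP.mul_eq]; split_ifs <;> simp
  simp only [schurMultiplier_apply, Finset.mul_sum, Finset.sum_mul, block]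
  simp

lemma schurMultiplier_one_symbol (hP : CompleteOrthogonalIdempotents P) (a : A) :
    schurMultiplier P (Matrix.of fun _ _ ↦ (1 : R)) a = a := by
  simp [schurMultiplier_apply, ← Finset.mul_sum, ← Finset.sum_mul, hP.complete]

lemma schurMultiplier_schurMultiplier (hP : OrthogonalIdempotents P) (c c' : Matrix ι ι R)
    (a : A) : schurMultiplier P c (schurMultiplier P c' a) = schurMultiplier P (c ⊙ c') a := by
  rw [schurMultiplier_apply c, schurMultiplier_apply (c ⊙ c')]
  simp only [mul_schurMultiplier_mul hP, smul_smul, Matrix.hadamard_apply]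

variable (R P) in
/-- The pinching (conditional expectation) `a ↦ ∑ i, P i * a * P i` onto the block-diagonal
elements, those that commute with every `P i`. -/
def pinching : A →ₗ[R] A := ∑ i, LinearMap.mulLeftRight R (P i, P i)

lemma pinching_apply (a : A) : pinching R P a = ∑ i, P i * a * P i := by
  simp [pinching]

lemma pinching_eq_schurMultiplier_one [DecidableEq ι] :
    pinching R P = schurMultiplier P (1 : Matrix ι ι R) := by
  ext a
  simp [pinching_apply, schurMultiplier_apply, Matrix.one_apply, ite_smul]

lemma commute_pinching (hP : OrthogonalIdempotents P) (a : A) (k : ι) :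
    Commute (P k) (pinching R P a) := by
  classical
  simp only [commute_iff_eq, pinching_apply, Finset.mul_sum, Finset.sum_mul, mul_assoc, hP.mul_eq]
  simp [← mul_assoc, hP.mul_eq]

lemma pinching_mul_of_commute {b : A} (hb : ∀ k, Commute (P k) b) (a : A) :
    pinching R P (a * b) = pinching R P a * b := by
  simp only [pinching_apply, Finset.sum_mul]
  exact Finset.sum_congr rfl fun k _ ↦ by simp only [mul_assoc, (hb k).eq]

lemma pinching_eq_self_of_commute (hP : CompleteOrthogonalIdempotents P) {a : A}
    (ha : ∀ k, Commute (P k) a) : pinching R P a = a := by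
  have pinching_one : pinching R P 1 = 1 := by
    simp only [pinching_apply, mul_one, (hP.idem _).eq, hP.complete]
  simpa [pinching_one] using pinching_mul_of_commute (R := R) ha 1

lemma commutator_eq_schurMultiplier (hP : CompleteOrthogonalIdempotents P) (h : ι → R) (a : A) :
    (∑ k, h k • P k) * a - a * ∑ k, h k • P k =
      schurMultiplier P (Matrix.of fun i j ↦ h i - h j) a := by
  have left : (∑ k, h k • P k) * a = schurMultiplier P (Matrix.of fun i _ ↦ h i) a := by
    simp [schurMultiplier_apply, ← Finset.mul_sum, ← Finset.smul_sum, hP.complete, Finset.sum_mul]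
  have right : a * ∑ k, h k • P k = schurMultiplier P (Matrix.of fun _ j ↦ h j) a := by
    rw [schurMultiplier_apply, Finset.sum_comm]
    simp [← Finset.sum_mul, ← Finset.smul_sum, hP.complete, Finset.mul_sum]
  rw [left, right, ← schurMultiplier_sub_apply]
  rfl

lemma commute_sum_smul (hP : OrthogonalIdempotents P) (c : ι → R) (k : ι) :
    Commute (P k) (∑ l, c l • P l) := by
  refine .sum_right _ _ _ fun l _ ↦ .smul_right ?_ (c l)
  rcases eq_or_ne k l with rfl | hkl
  · exact .refl _
  · exact (hP.ortho hkl).trans (hP.ortho hkl.symm).symm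

variable [StarRing A]

lemma star_sum_mul_mul_self (hP : OrthogonalIdempotents P) (hsa : ∀ i, IsSelfAdjoint (P i))
    (x : ι → A) :
    star (∑ i, P i * x i) * ∑ i, P i * x i = ∑ i, star (x i) * P i * x i := by
  classical
  have block (i j : ι) : star (x i) * P i * (P j * x j) =
      if i = j then star (x i) * P i * x i else 0 := by
    rw [mul_assoc, ← mul_assoc (P i), hP.mul_eq]
    split_ifs with hij
    · rw [hij, mul_assoc]
    · simp
  simp only [star_sum, star_mul, (hsa _).star_eq, Finset.sum_mul, Finset.mul_sum, block]
  simp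

lemma star_pinching (hsa : ∀ i, IsSelfAdjoint (P i)) (a : A) :
    star (pinching R P a) = pinching R P (star a) := by
  simp only [pinching_apply, star_sum, star_mul, (hsa _).star_eq, mul_assoc]

end SchurMultiplier

section CommutatorInverse

variable {K A ι : Type*} [Field K] {h : ι → K}

lemma hadamard_sub_inv [DecidableEq ι] (hh : Function.Injective h) :
    (Matrix.of fun i j ↦ h i - h j) ⊙ (Matrix.of fun i j ↦ (h i - h j)⁻¹) =
      Matrix.of (fun _ _ ↦ (1 : K)) - 1 := by
  ext i j
  rcases eq_or_ne i j with rfl | hij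
  · simp
  · simp [hij, sub_ne_zero.2 (hh.ne hij)]

variable [Ring A] [Algebra K A] [Fintype ι] {P : ι → A}

/-- The partial inverse of the commutator `a ↦ H * a - a * H` with `H = ∑ k, h k • P k`: it divides
the `(i, j)` block by `h i - h j`. The diagonal blocks are sent to `0`, because `0⁻¹ = 0`. -/
def commutatorInverse (P : ι → A) (h : ι → K) : A →ₗ[K] A :=
  schurMultiplier P (Matrix.of fun i j ↦ (h i - h j)⁻¹)

lemma sub_pinching_eq_schurMultiplier [DecidableEq ι] (hP : CompleteOrthogonalIdempotents P)
    (a : A) : a - pinching K P a = schurMultiplier P (Matrix.of (fun _ _ ↦ (1 : K)) - 1) a := by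
  rw [schurMultiplier_sub_apply, schurMultiplier_one_symbol hP, pinching_eq_schurMultiplier_one]

lemma commutator_commutatorInverse (hP : CompleteOrthogonalIdempotents P)
    (hh : Function.Injective h) (a : A) :
    (∑ k, h k • P k) * commutatorInverse P h a - commutatorInverse P h a * ∑ k, h k • P k =
      a - pinching K P a := by
  classical
  rw [commutator_eq_schurMultiplier hP, commutatorInverse,
    schurMultiplier_schurMultiplier hP.toOrthogonalIdempotents, hadamard_sub_inv hh,
    sub_pinching_eq_schurMultiplier hP]

lemma commutatorInverse_commutator (hP : CompleteOrthogonalIdempotents P)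
    (hh : Function.Injective h) (a : A) :
    commutatorInverse P h ((∑ k, h k • P k) * a - a * ∑ k, h k • P k) = a - pinching K P a := by
  classical
  rw [commutator_eq_schurMultiplier hP, commutatorInverse,
    schurMultiplier_schurMultiplier hP.toOrthogonalIdempotents, Matrix.hadamard_comm,
    hadamard_sub_inv hh, sub_pinching_eq_schurMultiplier hP]

lemma pinching_commutatorInverse (hP : OrthogonalIdempotents P) (a : A) :
    pinching K P (commutatorInverse P h a) = 0 := by
  classical
  rw [pinching_eq_schurMultiplier_one, commutatorInverse, schurMultiplier_schurMultiplier hP,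
    Matrix.one_hadamard_eq_zero_iff.2 (by ext; simp), schurMultiplier_zero_apply]

lemma commutatorInverse_eq_zero_of_commute (hP : CompleteOrthogonalIdempotents P) {a : A}
    (ha : ∀ k, Commute (P k) a) : commutatorInverse P h a = 0 := by
  classical
  rw [← pinching_eq_self_of_commute (R := K) hP ha, pinching_eq_schurMultiplier_one,
    commutatorInverse, schurMultiplier_schurMultiplier hP.toOrthogonalIdempotents,
    Matrix.hadamard_one_eq_zero_iff.2 (by ext; simp), schurMultiplier_zero_apply]

end CommutatorInverse

section CStar

variable {𝒜 ι : Type*} [CStarAlgebra 𝒜] [Fintype ι] {P : ι → 𝒜}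

lemma star_sum_smul_mul_self (hP : OrthogonalIdempotents P) (hsa : ∀ i, IsSelfAdjoint (P i))
    (c : ι → ℂ) :
    star (∑ j, c j • P j) * ∑ j, c j • P j = ∑ j, ‖c j‖ ^ 2 • P j := by
  have h := star_sum_mul_mul_self hP hsa fun j ↦ algebraMap ℂ 𝒜 (c j)
  simp only [← Algebra.commutes (c _) (P _), ← Algebra.smul_def] at h
  rw [h]
  refine Finset.sum_congr rfl fun j _ ↦ ?_
  rw [← algebraMap_star_comm, mul_assoc, ← Algebra.commutes, ← Algebra.smul_def,
    ← Algebra.smul_def, smul_smul, Complex.star_def, Complex.conj_mul', ← Complex.ofReal_pow,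
    Complex.coe_smul]

lemma sum_star_sum_smul_mul_self_le [PartialOrder 𝒜] [StarOrderedRing 𝒜]
    (hP : CompleteOrthogonalIdempotents P) (hsa : ∀ i, IsSelfAdjoint (P i))
    {c : Matrix ι ι ℂ} {C : ℝ} (hc : ∀ j, ∑ i, ‖c i j‖ ^ 2 ≤ C) :
    ∑ i, star (∑ j, c i j • P j) * ∑ j, c i j • P j ≤ C • (1 : 𝒜) := calc
  _ = ∑ j, (∑ i, ‖c i j‖ ^ 2) • P j := by
    simp only [star_sum_smul_mul_self hP.toOrthogonalIdempotents hsa, Finset.sum_smul]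
    exact Finset.sum_comm
  _ ≤ ∑ j, C • P j := by
    gcongr with j
    · exact IsStarProjection.nonneg ⟨hP.idem j, hsa j⟩
    · exact hc j
  _ = C • (1 : 𝒜) := by rw [← Finset.smul_sum, hP.complete]

lemma star_schurMultiplier_mul_self_le [PartialOrder 𝒜] [StarOrderedRing 𝒜]
    (hP : CompleteOrthogonalIdempotents P) (hsa : ∀ i, IsSelfAdjoint (P i))
    {c : Matrix ι ι ℂ} {C : ℝ} (hc : ∀ j, ∑ i, ‖c i j‖ ^ 2 ≤ C) (a : 𝒜) :
    star (schurMultiplier P c a) * schurMultiplier P c a ≤ (C * ‖a‖ ^ 2) • (1 : 𝒜) := by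
  set Y : ι → 𝒜 := fun i ↦ ∑ j, c i j • P j
  calc
    _ = ∑ i, star (a * Y i) * P i * (a * Y i) := by
      rw [schurMultiplier_eq_sum_mul, star_sum_mul_mul_self hP.toOrthogonalIdempotents hsa]
    _ ≤ ∑ i, star (a * Y i) * 1 * (a * Y i) := by
      gcongr with i
      exact star_left_conjugate_le_conjugate
        (IsStarProjection.le_one ⟨hP.idem i, hsa i⟩) (a * Y i)
    _ = ∑ i, star (Y i) * (star a * a) * Y i := by simp only [star_mul, mul_one, mul_assoc]
    _ ≤ ∑ i, star (Y i) * algebraMap ℝ 𝒜 (‖a‖ ^ 2) * Y i := by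
      gcongr with i
      exact star_left_conjugate_le_conjugate CStarAlgebra.star_mul_le_algebraMap_norm_sq (Y i)
    _ = ‖a‖ ^ 2 • ∑ i, star (Y i) * Y i := by
      simp only [← Algebra.commutes, Finset.mul_sum, Algebra.smul_def, mul_assoc]
    _ ≤ ‖a‖ ^ 2 • C • (1 : 𝒜) := by
      gcongr
      exact sum_star_sum_smul_mul_self_le hP hsa hc
    _ = (C * ‖a‖ ^ 2) • (1 : 𝒜) := by rw [smul_smul, mul_comm]

lemma norm_schurMultiplier_le (hP : CompleteOrthogonalIdempotents P)
    (hsa : ∀ i, IsSelfAdjoint (P i)) {c : Matrix ι ι ℂ} {C : ℝ} (hC : 0 ≤ C)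
    (hc : ∀ j, ∑ i, ‖c i j‖ ^ 2 ≤ C ^ 2) (a : 𝒜) :
    ‖schurMultiplier P c a‖ ≤ C * ‖a‖ := by
  let _ := CStarAlgebra.spectralOrder 𝒜
  have := CStarAlgebra.spectralOrderedRing 𝒜
  refine (sq_le_sq₀ (norm_nonneg _) (by positivity)).1 ?_
  rw [sq ‖_‖, ← CStarRing.norm_star_mul_self, mul_pow]
  refine (CStarAlgebra.norm_le_iff_le_algebraMap _ (by positivity) (star_mul_self_nonneg _)).2 ?_
  rw [Algebra.algebraMap_eq_smul_one]
  exact star_schurMultiplier_mul_self_le hP hsa hc a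

lemma norm_pinching_le (hP : CompleteOrthogonalIdempotents P) (hsa : ∀ i, IsSelfAdjoint (P i))
    (a : 𝒜) : ‖pinching ℂ P a‖ ≤ ‖a‖ := by
  classical
  rw [pinching_eq_schurMultiplier_one, ← one_mul ‖a‖]
  refine norm_schurMultiplier_le hP hsa zero_le_one (fun j ↦ le_of_eq ?_) a
  simp [Matrix.one_apply, apply_ite]

end CStar

section SeparatedPoints

variable {ι : Type*} {η : ℝ}

lemma sum_one_div_sq_le_of_injOn {s : Finset ι} {f : ι → ℕ} (hf : Set.InjOn f s) :
    ∑ i ∈ s, 1 / (f i : ℝ) ^ 2 ≤ Real.pi ^ 2 / 6 := by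
  rw [← Finset.sum_image (f := fun n : ℕ ↦ 1 / (n : ℝ) ^ 2) hf]
  exact sum_le_hasSum _ (fun _ _ ↦ by positivity) hasSum_zeta_two

-- Distinct points lie in distinct cells `[nη, (n + 1)η)` with `n ≥ 1`, so the sum is at most
-- `∑ 1 / (nη)²`.
lemma sum_inv_sq_le_of_separated (hη : 0 < η) {s : Finset ι} {x : ι → ℝ}
    (hx : ∀ i ∈ s, η ≤ x i) (hsep : (s : Set ι).Pairwise fun i j ↦ η ≤ |x i - x j|) :
    ∑ i ∈ s, (x i)⁻¹ ^ 2 ≤ Real.pi ^ 2 / 6 / η ^ 2 := by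
  set n : ι → ℕ := fun i ↦ ⌊x i / η⌋₊
  have one_le_div {i : ι} (hi : i ∈ s) : 1 ≤ x i / η := (one_le_div hη).2 (hx i hi)
  have n_injOn : Set.InjOn n s := by
    intro i hi j hj hij
    by_contra hne
    have hlt : |x i / η - x j / η| < 1 := Int.abs_sub_lt_one_of_floor_eq_floor <| by
      rw [← Int.natCast_floor_eq_floor (zero_le_one.trans (one_le_div hi)),
        ← Int.natCast_floor_eq_floor (zero_le_one.trans (one_le_div hj))]
      exact congrArg _ hij
    rw [← sub_div, abs_div, abs_of_pos hη, div_lt_one hη] at hlt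
    exact hlt.not_ge (hsep hi hj hne)
  have inv_sq_le {i : ι} (hi : i ∈ s) : (x i)⁻¹ ^ 2 ≤ 1 / (n i : ℝ) ^ 2 / η ^ 2 := by
    have n_pos : 0 < (n i : ℝ) := by exact_mod_cast Nat.floor_pos.2 (one_le_div hi)
    have n_mul_le : n i * η ≤ x i :=
      (le_div_iff₀ hη).1 (Nat.floor_le (zero_le_one.trans (one_le_div hi)))
    rw [div_div, ← mul_pow, inv_pow, one_div]
    gcongr
  calc ∑ i ∈ s, (x i)⁻¹ ^ 2 ≤ ∑ i ∈ s, 1 / (n i : ℝ) ^ 2 / η ^ 2 :=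
        Finset.sum_le_sum fun i hi ↦ inv_sq_le hi
    _ ≤ Real.pi ^ 2 / 6 / η ^ 2 := by
        rw [← Finset.sum_div]
        gcongr
        exact sum_one_div_sq_le_of_injOn n_injOn

variable [Fintype ι] {h : ι → ℝ}

lemma sum_filter_lt_inv_sub_sq_le (hη : 0 < η) (hgap : Pairwise fun k l ↦ η ≤ |h k - h l|)
    (l : ι) : ∑ k with h l < h k, (h k - h l)⁻¹ ^ 2 ≤ Real.pi ^ 2 / 6 / η ^ 2 := by
  refine sum_inv_sq_le_of_separated hη (fun k hk ↦ ?_) fun i _ j _ hij ↦ ?_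
  · have hlt : h l < h k := (Finset.mem_filter.1 hk).2
    simpa only [abs_of_pos (sub_pos.2 hlt)] using hgap (ne_of_apply_ne h hlt.ne')
  · simpa only [sub_sub_sub_cancel_right] using hgap hij

lemma sum_inv_sub_sq_le (hη : 0 < η) (hgap : Pairwise fun k l ↦ η ≤ |h k - h l|) (l : ι) :
    ∑ k, (h k - h l)⁻¹ ^ 2 ≤ (Real.pi / (√3 * η)) ^ 2 := by
  have right := sum_filter_lt_inv_sub_sq_le hη hgap l
  have left : ∑ k with h k < h l, (h k - h l)⁻¹ ^ 2 ≤ Real.pi ^ 2 / 6 / η ^ 2 := by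
    have hgap_neg : Pairwise fun k l ↦ η ≤ |(-h k) - (-h l)| := fun k l hkl ↦ by
      simpa only [neg_sub_neg, abs_sub_comm] using hgap hkl
    refine le_of_eq_of_le ?_ (sum_filter_lt_inv_sub_sq_le hη hgap_neg l)
    simp only [neg_lt_neg_iff, neg_sub_neg, inv_pow, sub_sq_comm]
  have split (k : ι) : (h k - h l)⁻¹ ^ 2 =
      (if h l < h k then (h k - h l)⁻¹ ^ 2 else 0) +
        if h k < h l then (h k - h l)⁻¹ ^ 2 else 0 := by
    rcases lt_trichotomy (h k) (h l) with hkl | hkl | hkl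
    · simp [hkl, hkl.not_gt]
    · simp [hkl]
    · simp [hkl, hkl.not_gt]
  calc ∑ k, (h k - h l)⁻¹ ^ 2
      = ∑ k with h l < h k, (h k - h l)⁻¹ ^ 2 + ∑ k with h k < h l, (h k - h l)⁻¹ ^ 2 := by
        rw [Finset.sum_congr rfl fun k _ ↦ split k, Finset.sum_add_distrib, Finset.sum_filter,
          Finset.sum_filter]
    _ ≤ Real.pi ^ 2 / 6 / η ^ 2 + Real.pi ^ 2 / 6 / η ^ 2 := add_le_add right left
    _ = (Real.pi / (√3 * η)) ^ 2 := by
        rw [div_pow, mul_pow, Real.sq_sqrt zero_le_three]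
        ring

lemma norm_commutatorInverse_le {𝒜 : Type*} [CStarAlgebra 𝒜] {P : ι → 𝒜}
    (hP : CompleteOrthogonalIdempotents P) (hsa : ∀ i, IsSelfAdjoint (P i)) (hη : 0 < η)
    (hgap : Pairwise fun k l ↦ η ≤ |h k - h l|) (a : 𝒜) :
    ‖commutatorInverse P (fun k ↦ (h k : ℂ)) a‖ ≤ Real.pi / (√3 * η) * ‖a‖ := by
  refine norm_schurMultiplier_le hP hsa (by positivity) (fun l ↦ ?_) a
  simpa [← Complex.ofReal_sub, Complex.norm_real] using sum_inv_sub_sq_le hη hgap l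

end SeparatedPoints

section BlochEquation

/-- The fixed points of `blochMap Γ D W` solve the Bloch equation: when `Γ` inverts the commutator
with `H` off the diagonal and `D` is the pinching, `1 + X` is a wave operator, intertwining `H + W`
with the block-diagonal effective operator `H + D (W * (1 + X))`. -/
def blochMap {R A : Type*} [Ring R] [Ring A] [Module R A] (Γ D : A →ₗ[R] A) (W X : A) : A :=
  Γ (X * D (W * (1 + X)) - W * (1 + X))

section Intertwining

variable {K A ι : Type*} [Field K] [Ring A] [Algebra K A] [Fintype ι] {P : ι → A} {h : ι → K}
  {W X : A}

lemma pinching_eq_zero_of_blochMap_eq_self (hP : OrthogonalIdempotents P)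
    (hX : blochMap (commutatorInverse P h) (pinching K P) W X = X) : pinching K P X = 0 := by
  rw [← hX]
  exact pinching_commutatorInverse hP _

lemma intertwining_of_blochMap_eq_self (hP : CompleteOrthogonalIdempotents P)
    (hh : Function.Injective h)
    (hX : blochMap (commutatorInverse P h) (pinching K P) W X = X) :
    (∑ k, h k • P k + W) * (1 + X) =
      (1 + X) * (∑ k, h k • P k + pinching K P (W * (1 + X))) := by
  set H := ∑ k, h k • P k
  set B := pinching K P (W * (1 + X)) with hB
  have pinching_mul : pinching K P (X * B) = 0 := by
    rw [pinching_mul_of_commute (commute_pinching hP.toOrthogonalIdempotents _),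
      pinching_eq_zero_of_blochMap_eq_self hP.toOrthogonalIdempotents hX, zero_mul]
  have commutator_eq : H * X - X * H = X * B - W * (1 + X) + B := by
    have hX' : commutatorInverse P h (X * B - W * (1 + X)) = X := hX
    have := commutator_commutatorInverse hP hh (X * B - W * (1 + X))
    rwa [hX', map_sub (pinching K P), pinching_mul, ← hB, zero_sub, sub_neg_eq_add] at this
  calc (H + W) * (1 + X) = (H * X - X * H) + X * H + H + W * (1 + X) := by noncomm_ring
    _ = (1 + X) * (H + B) := by rw [commutator_eq]; noncomm_ring

end Intertwining

section FixedPoint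

variable {R A : Type*} [Ring R] [NormedRing A] [Module R A] {Γ D : A →ₗ[R] A} {W : A} {γ : ℝ}

lemma norm_mul_one_add_le (W X : A) : ‖W * (1 + X)‖ ≤ ‖W‖ * (1 + ‖X‖) := calc
  ‖W * (1 + X)‖ = ‖W + W * X‖ := by rw [mul_add, mul_one]
  _ ≤ ‖W‖ + ‖W‖ * ‖X‖ := (norm_add_le _ _).trans (by gcongr; exact norm_mul_le _ _)
  _ = ‖W‖ * (1 + ‖X‖) := by ring

lemma norm_blochMap_le (hγ : 0 ≤ γ) (hΓ : ∀ a, ‖Γ a‖ ≤ γ * ‖a‖) (hD : ∀ a, ‖D a‖ ≤ ‖a‖)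
    (W X : A) : ‖blochMap Γ D W X‖ ≤ γ * ‖W‖ * (1 + ‖X‖) ^ 2 := by
  have hW := norm_mul_one_add_le W X
  calc ‖blochMap Γ D W X‖ ≤ γ * ‖X * D (W * (1 + X)) - W * (1 + X)‖ := hΓ _
    _ ≤ γ * (‖X‖ * (‖W‖ * (1 + ‖X‖)) + ‖W‖ * (1 + ‖X‖)) := by
        gcongr
        exact (norm_sub_le _ _).trans
          (add_le_add (norm_mul_le_of_le le_rfl ((hD _).trans hW)) hW)
    _ = γ * ‖W‖ * (1 + ‖X‖) ^ 2 := by ring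

lemma norm_blochMap_sub_le (hγ : 0 ≤ γ) (hΓ : ∀ a, ‖Γ a‖ ≤ γ * ‖a‖) (hD : ∀ a, ‖D a‖ ≤ ‖a‖)
    (W X Y : A) :
    ‖blochMap Γ D W X - blochMap Γ D W Y‖ ≤ γ * ‖W‖ * (2 + ‖X‖ + ‖Y‖) * ‖X - Y‖ := by
  have sub_eq : blochMap Γ D W X - blochMap Γ D W Y =
      Γ ((X - Y) * D (W * (1 + X)) + Y * D (W * (X - Y)) - W * (X - Y)) := by
    have : W * (X - Y) = W * (1 + X) - W * (1 + Y) := by noncomm_ring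
    rw [blochMap, blochMap, ← map_sub, this, map_sub D]
    noncomm_ring
  have hWXY : ‖W * (X - Y)‖ ≤ ‖W‖ * ‖X - Y‖ := norm_mul_le _ _
  calc ‖blochMap Γ D W X - blochMap Γ D W Y‖
      ≤ γ * ‖(X - Y) * D (W * (1 + X)) + Y * D (W * (X - Y)) - W * (X - Y)‖ := sub_eq ▸ hΓ _
    _ ≤ γ * (‖X - Y‖ * (‖W‖ * (1 + ‖X‖)) + ‖Y‖ * (‖W‖ * ‖X - Y‖) + ‖W‖ * ‖X - Y‖) := by
        gcongr
        refine (norm_sub_le _ _).trans (add_le_add (norm_add_le_of_le ?_ ?_) hWXY)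
        · exact norm_mul_le_of_le le_rfl ((hD _).trans (norm_mul_one_add_le W X))
        · exact norm_mul_le_of_le le_rfl ((hD _).trans hWXY)
    _ = γ * ‖W‖ * (2 + ‖X‖ + ‖Y‖) * ‖X - Y‖ := by ring

lemma exists_blochMap_eq_self [CompleteSpace A] (hγ : 0 ≤ γ) (hΓ : ∀ a, ‖Γ a‖ ≤ γ * ‖a‖)
    (hD : ∀ a, ‖D a‖ ≤ ‖a‖) (hW : γ * ‖W‖ ≤ 1 / 8) :
    ∃ X, blochMap Γ D W X = X ∧ ‖X‖ ≤ 3 / 2 * (γ * ‖W‖) := by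
  set g : ℝ := γ * ‖W‖
  have hg : 0 ≤ g := by positivity
  have mapsTo : Set.MapsTo (blochMap Γ D W) (Metric.closedBall 0 (3 / 2 * g))
      (Metric.closedBall 0 (3 / 2 * g)) := by
    intro X hX
    rw [mem_closedBall_zero_iff] at hX ⊢
    calc ‖blochMap Γ D W X‖ ≤ g * (1 + ‖X‖) ^ 2 := norm_blochMap_le hγ hΓ hD W X
      _ ≤ g * (1 + 3 / 16) ^ 2 := by gcongr; linarith
      _ ≤ 3 / 2 * g := by linarith
  have contracting : ContractingWith (1 / 2 : NNReal) (mapsTo.restrict (blochMap Γ D W) _ _) := by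
    refine ⟨by rw [← NNReal.coe_lt_coe]; norm_num, LipschitzWith.of_dist_le_mul fun X Y ↦ ?_⟩
    have hX := mem_closedBall_zero_iff.1 X.2
    have hY := mem_closedBall_zero_iff.1 Y.2
    rw [Subtype.dist_eq, Subtype.dist_eq, dist_eq_norm, dist_eq_norm]
    calc ‖blochMap Γ D W X - blochMap Γ D W Y‖
        ≤ g * (2 + ‖X.1‖ + ‖Y.1‖) * ‖X.1 - Y.1‖ := norm_blochMap_sub_le hγ hΓ hD W X Y
      _ ≤ (1 / 8 * (2 + 1 + 1)) * ‖X.1 - Y.1‖ := by gcongr <;> linarith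
      _ = ((1 / 2 : NNReal) : ℝ) * ‖X.1 - Y.1‖ := by norm_num
  obtain ⟨X, hX, hfix, -⟩ := ContractingWith.exists_fixedPoint'
    Metric.isClosed_closedBall.isComplete mapsTo contracting
    (Metric.mem_closedBall_self (by positivity)) (edist_ne_top _ _)
  exact ⟨X, hfix, mem_closedBall_zero_iff.1 hX⟩

end FixedPoint

end BlochEquation

section SylvesterUniqueness

variable {K A ι : Type*} [Field K] [NormedRing A] [Algebra K A] [Fintype ι] {P : ι → A}
  {h : ι → K} {B C G : A} {γ : ℝ}

-- The off-diagonal part `O` of `G` solves `O = Γ (O * B - C * O)`, a strict contraction.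
lemma commute_of_sylvester (hP : CompleteOrthogonalIdempotents P) (hh : Function.Injective h)
    (hγ : 0 ≤ γ) (hΓ : ∀ a, ‖commutatorInverse P h a‖ ≤ γ * ‖a‖)
    (hB : ∀ k, Commute (P k) B) (hC : ∀ k, Commute (P k) C) (hBC : γ * (‖B‖ + ‖C‖) < 1)
    (hG : G * (∑ k, h k • P k + B) = (∑ k, h k • P k + C) * G) (k : ι) : Commute (P k) G := by
  set D := pinching K P G with hD
  have hDcomm (k : ι) : Commute (P k) D := commute_pinching hP.toOrthogonalIdempotents G k
  have commutator_eq : (∑ k, h k • P k) * G - G * ∑ k, h k • P k = G * B - C * G := by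
    rw [mul_add, add_mul] at hG
    rw [sub_eq_sub_iff_add_eq_add, ← hG]
    abel
  have diagonal_part : commutatorInverse P h (D * B - C * D) = 0 :=
    commutatorInverse_eq_zero_of_commute hP fun k ↦
      ((hDcomm k).mul_right (hB k)).sub_right ((hC k).mul_right (hDcomm k))
  have fixed : G - D = commutatorInverse P h ((G - D) * B - C * (G - D)) := calc
    G - D = commutatorInverse P h (G * B - C * G) := by
      rw [← commutator_eq, commutatorInverse_commutator hP hh]
    _ = commutatorInverse P h (G * B - C * G - (D * B - C * D)) := by
      rw [map_sub _ (G * B - C * G), diagonal_part, sub_zero]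
    _ = _ := by congr 1; noncomm_ring
  have norm_le : ‖G - D‖ ≤ γ * (‖B‖ + ‖C‖) * ‖G - D‖ := calc
    ‖G - D‖ ≤ γ * ‖(G - D) * B - C * (G - D)‖ := by
      conv_lhs => rw [fixed]
      exact hΓ _
    _ ≤ γ * (‖G - D‖ * ‖B‖ + ‖C‖ * ‖G - D‖) := by
      gcongr
      exact (norm_sub_le _ _).trans (add_le_add (norm_mul_le _ _) (norm_mul_le _ _))
    _ = γ * (‖B‖ + ‖C‖) * ‖G - D‖ := by ring
  have hGD : G = D := by
    rw [← sub_eq_zero, ← norm_eq_zero]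
    nlinarith [norm_nonneg (G - D)]
  rw [hGD]
  exact hDcomm k

end SylvesterUniqueness

section InvSqrt

lemma abs_inv_sqrt_sub_one_le {x : ℝ} (hx : 1 / 2 ≤ x) : |(√x)⁻¹ - 1| ≤ |x - 1| := by
  have half_le : 1 / 2 ≤ √x := Real.le_sqrt_of_sq_le (by linarith)
  have sq_sqrt : √x ^ 2 = x := Real.sq_sqrt (by linarith)
  have one_le : 1 ≤ √x * (1 + √x) := by linarith [sq_sqrt, half_le]
  have sub_one_eq : (√x)⁻¹ - 1 = (1 - x) / (√x * (1 + √x)) := by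
    field_simp
    linarith
  rw [sub_one_eq, abs_div, abs_sub_comm, abs_of_pos (by positivity : 0 < √x * (1 + √x))]
  exact div_le_self (abs_nonneg _) one_le

variable {𝒜 : Type*} [CStarAlgebra 𝒜] {a : 𝒜}

/-- The inverse square root `a ^ (-1/2)` of a positive invertible element, by the continuous
functional calculus. -/
noncomputable def invSqrt (a : 𝒜) : 𝒜 := cfc (fun x : ℝ ↦ (√x)⁻¹) a

lemma isSelfAdjoint_invSqrt (a : 𝒜) : IsSelfAdjoint (invSqrt a) := cfc_predicate _ _

lemma commute_invSqrt {b : 𝒜} (hab : Commute b a) : Commute b (invSqrt a) :=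
  (Commute.cfc_real hab.symm _).symm

lemma abs_sub_one_le_of_mem_spectrum {x : ℝ} (hx : x ∈ spectrum ℝ a) : |x - 1| ≤ ‖a - 1‖ := by
  have : Nontrivial 𝒜 := not_subsingleton_iff_nontrivial.1 fun _ ↦ by
    simp [spectrum.of_subsingleton] at hx
  have sub_mem : x - 1 ∈ spectrum ℝ (a - 1) := by
    rw [← map_one (algebraMap ℝ 𝒜), ← spectrum.sub_singleton_eq]
    exact Set.sub_mem_sub hx rfl
  exact spectrum.norm_le_norm_of_mem sub_mem

lemma half_le_of_mem_spectrum (h : ‖a - 1‖ ≤ 1 / 2) {x : ℝ} (hx : x ∈ spectrum ℝ a) :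
    1 / 2 ≤ x := by
  linarith [(abs_le.1 ((abs_sub_one_le_of_mem_spectrum hx).trans h)).1]

lemma continuousOn_inv_sqrt_spectrum (h : ‖a - 1‖ ≤ 1 / 2) :
    ContinuousOn (fun x : ℝ ↦ (√x)⁻¹) (spectrum ℝ a) :=
  Real.continuous_sqrt.continuousOn.inv₀ fun x hx ↦ by
    have := half_le_of_mem_spectrum h hx
    positivity

lemma invSqrt_mul_mul_invSqrt (ha : IsSelfAdjoint a) (h : ‖a - 1‖ ≤ 1 / 2) :
    invSqrt a * a * invSqrt a = 1 := by
  have hcont := continuousOn_inv_sqrt_spectrum h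
  set f : ℝ → ℝ := fun x ↦ (√x)⁻¹
  calc invSqrt a * a * invSqrt a = cfc f a * cfc id a * cfc f a := by rw [cfc_id ℝ a]; rfl
    _ = cfc (fun x ↦ f x * id x * f x) a := by
      rw [cfc_mul .., cfc_mul ..]
    _ = cfc 1 a := cfc_congr fun x hx ↦ by
      have x_pos : 0 < x := by linarith [half_le_of_mem_spectrum h hx]
      have sq_sqrt : √x ^ 2 = x := Real.sq_sqrt x_pos.le
      simp only [f, id, Pi.one_apply]
      field_simp
      exact sq_sqrt.symm
    _ = 1 := cfc_one ℝ a

lemma norm_invSqrt_sub_one_le (ha : IsSelfAdjoint a) (h : ‖a - 1‖ ≤ 1 / 2) :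
    ‖invSqrt a - 1‖ ≤ ‖a - 1‖ := by
  have sub_one_eq : invSqrt a - 1 = cfc (fun x : ℝ ↦ (√x)⁻¹ - 1) a := by
    rw [cfc_sub _ _ a (continuousOn_inv_sqrt_spectrum h) continuousOn_const, cfc_const_one ℝ a]
    rfl
  rw [sub_one_eq]
  exact norm_cfc_le (norm_nonneg _) fun x hx ↦
    (abs_inv_sqrt_sub_one_le (half_le_of_mem_spectrum h hx)).trans
      (abs_sub_one_le_of_mem_spectrum hx)

end InvSqrt

section BlockDiagonalization

variable {𝒜 : Type*} [CStarAlgebra 𝒜]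

lemma mem_unitary_of_star_mul_self_of_norm_sub_one_lt {u : 𝒜} (hu : star u * u = 1)
    (hlt : ‖u - 1‖ < 1) : u ∈ unitary 𝒜 := by
  have isUnit_u : IsUnit u := by
    rw [← sub_sub_self 1 u]
    exact isUnit_one_sub_of_norm_lt_one (by rwa [norm_sub_rev])
  exact Unitary.mem_iff.2 ⟨hu, left_inv_eq_right_inv hu isUnit_u.mul_val_inv ▸ isUnit_u.mul_val_inv⟩

/-- The unitary part `b (b⋆ b) ^ (-1/2)` of the polar decomposition of an invertible element. -/
noncomputable def polarUnitary (b : 𝒜) : 𝒜 := b * invSqrt (star b * b)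

lemma star_polarUnitary_mul_self {b : 𝒜} (hb : ‖star b * b - 1‖ ≤ 1 / 2) :
    star (polarUnitary b) * polarUnitary b = 1 := by
  rw [← invSqrt_mul_mul_invSqrt (.star_mul_self b) hb, polarUnitary, star_mul,
    (isSelfAdjoint_invSqrt _).star_eq]
  simp only [mul_assoc]

lemma norm_polarUnitary_one_add_sub_one_le {x : 𝒜}
    (hx : ‖star (1 + x) * (1 + x) - 1‖ ≤ 1 / 2) :
    ‖polarUnitary (1 + x) - 1‖ ≤ ‖x‖ + ‖star (1 + x) * (1 + x) - 1‖ * (1 + ‖x‖) := by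
  have hT := norm_invSqrt_sub_one_le (.star_mul_self (1 + x)) hx
  rw [polarUnitary]
  set T := invSqrt (star (1 + x) * (1 + x))
  calc ‖(1 + x) * T - 1‖ = ‖x + ((T - 1) + x * (T - 1))‖ := by congr 1; noncomm_ring
    _ ≤ ‖x‖ + (‖T - 1‖ + ‖x‖ * ‖T - 1‖) :=
      norm_add_le_of_le le_rfl (norm_add_le_of_le le_rfl (norm_mul_le _ _))
    _ = ‖x‖ + ‖T - 1‖ * (1 + ‖x‖) := by ring
    _ ≤ ‖x‖ + ‖star (1 + x) * (1 + x) - 1‖ * (1 + ‖x‖) := by gcongr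

lemma commute_star_polarUnitary_mul_mul {p A B Ω : 𝒜} (hG : Commute p (star Ω * Ω))
    (hB : Commute p B) (hΩ : A * Ω = Ω * B) :
    Commute p (star (polarUnitary Ω) * A * polarUnitary Ω) := by
  have conj_eq : star (polarUnitary Ω) * A * polarUnitary Ω =
      invSqrt (star Ω * Ω) * (star Ω * Ω * B) * invSqrt (star Ω * Ω) := by
    rw [mul_assoc (star Ω), ← hΩ, polarUnitary, star_mul, (isSelfAdjoint_invSqrt _).star_eq]
    simp only [mul_assoc]
  have hT := commute_invSqrt hG
  rw [conj_eq]
  exact (hT.mul_right (hG.mul_right hB)).mul_right hT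

lemma star_mul_self_mul_of_intertwining {S : Type*} [Semigroup S] [StarMul S] {A Q Ω : S}
    (hA : IsSelfAdjoint A) (hΩ : A * Ω = Ω * Q) : star Ω * Ω * Q = star Q * (star Ω * Ω) := by
  have hΩ_star : star Ω * A = star Q * star Ω := by
    simpa only [star_mul, hA.star_eq] using congrArg star hΩ
  rw [mul_assoc, ← hΩ, ← mul_assoc, hΩ_star, mul_assoc]

variable {ι : Type*} [Fintype ι] {P : ι → 𝒜} {h : ι → ℝ} {W X B Ω : 𝒜} {γ : ℝ}

lemma isSelfAdjoint_sum_ofReal_smul (hsa : ∀ k, IsSelfAdjoint (P k)) (h : ι → ℝ) :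
    IsSelfAdjoint (∑ k, (h k : ℂ) • P k) :=
  isSelfAdjoint_sum _ fun k _ ↦ .smul (Complex.conj_ofReal (h k)) (hsa k)

lemma commute_star_mul_self_of_intertwining (hP : CompleteOrthogonalIdempotents P)
    (hsa : ∀ k, IsSelfAdjoint (P k)) (hh : Function.Injective h) (hγ : 0 ≤ γ)
    (hΓ : ∀ a, ‖commutatorInverse P (fun k ↦ (h k : ℂ)) a‖ ≤ γ * ‖a‖)
    (hW : IsSelfAdjoint W) (hB : ∀ k, Commute (P k) B) (hBγ : 2 * (γ * ‖B‖) < 1)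
    (hΩ : (∑ k, (h k : ℂ) • P k + W) * Ω = Ω * (∑ k, (h k : ℂ) • P k + B)) (k : ι) :
    Commute (P k) (star Ω * Ω) := by
  have hH := isSelfAdjoint_sum_ofReal_smul hsa h
  have hB_star (k : ι) : Commute (P k) (star B) := by
    simpa only [(hsa k).star_eq] using (hB k).star_star
  have sylvester := star_mul_self_mul_of_intertwining (hH.add hW) hΩ
  rw [star_add, hH.star_eq] at sylvester
  refine commute_of_sylvester hP (Complex.ofReal_injective.comp hh) hγ hΓ hB hB_star ?_ sylvester k
  rw [norm_star]
  linarith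

lemma norm_star_one_add_mul_self_sub_one_le (hP : CompleteOrthogonalIdempotents P)
    (hsa : ∀ k, IsSelfAdjoint (P k)) (hX : pinching ℂ P X = 0)
    (hcomm : ∀ k, Commute (P k) (star (1 + X) * (1 + X))) :
    ‖star (1 + X) * (1 + X) - 1‖ ≤ ‖X‖ ^ 2 := by
  have sub_one_eq : star (1 + X) * (1 + X) - 1 = pinching ℂ P (star X * X) := calc
    star (1 + X) * (1 + X) - 1 = pinching ℂ P (star (1 + X) * (1 + X) - 1) :=
      (pinching_eq_self_of_commute hP fun k ↦ (hcomm k).sub_right (.one_right _)).symm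
    _ = pinching ℂ P (X + star X + star X * X) := by
      rw [star_add, star_one]
      congr 1
      noncomm_ring
    _ = pinching ℂ P (star X * X) := by
      rw [map_add, map_add, ← star_pinching hsa, hX, star_zero, zero_add, zero_add]
  rw [sub_one_eq, sq, ← CStarRing.norm_star_mul_self]
  exact norm_pinching_le hP hsa _

theorem exists_unitary_commute_conj (hP : CompleteOrthogonalIdempotents P)
    (hsa : ∀ k, IsSelfAdjoint (P k)) (hh : Function.Injective h) (hγ : 0 ≤ γ)
    (hΓ : ∀ a, ‖commutatorInverse P (fun k ↦ (h k : ℂ)) a‖ ≤ γ * ‖a‖)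
    (hW : IsSelfAdjoint W) (hg : γ * ‖W‖ ≤ 1 / 8) :
    ∃ U ∈ unitary 𝒜, ‖U - 1‖ ≤ 2 * (γ * ‖W‖) ∧
      ∀ k, Commute (P k) (star U * (∑ k, (h k : ℂ) • P k + W) * U) := by
  obtain ⟨X, hX, hX_norm⟩ := exists_blochMap_eq_self hγ hΓ (norm_pinching_le hP hsa) hg
  have hX_pinching := pinching_eq_zero_of_blochMap_eq_self hP.toOrthogonalIdempotents hX
  have hΩ := intertwining_of_blochMap_eq_self hP (Complex.ofReal_injective.comp hh) hX
  set B := pinching ℂ P (W * (1 + X))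
  have hB (k : ι) : Commute (P k) B := commute_pinching hP.toOrthogonalIdempotents _ k
  have hBγ : 2 * (γ * ‖B‖) < 1 := calc
    2 * (γ * ‖B‖) ≤ 2 * (γ * (‖W‖ * (1 + ‖X‖))) := by
      gcongr
      exact (norm_pinching_le hP hsa _).trans (norm_mul_one_add_le W X)
    _ = 2 * (γ * ‖W‖) * (1 + ‖X‖) := by ring
    _ ≤ 2 * (1 / 8) * (1 + 3 / 16) := by gcongr; linarith
    _ < 1 := by norm_num
  have hG := commute_star_mul_self_of_intertwining hP hsa hh hγ hΓ hW hB hBγ hΩ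
  have hG_norm := norm_star_one_add_mul_self_sub_one_le hP hsa hX_pinching hG
  have hG_half : ‖star (1 + X) * (1 + X) - 1‖ ≤ 1 / 2 := by nlinarith [norm_nonneg X]
  have hU_norm : ‖polarUnitary (1 + X) - 1‖ ≤ 2 * (γ * ‖W‖) := calc
    _ ≤ ‖X‖ + ‖X‖ ^ 2 * (1 + ‖X‖) :=
      (norm_polarUnitary_one_add_sub_one_le hG_half).trans (by gcongr)
    _ = ‖X‖ * (1 + ‖X‖ * (1 + ‖X‖)) := by ring
    _ ≤ 3 / 2 * (γ * ‖W‖) * (1 + 3 / 16 * (1 + 3 / 16)) := by gcongr <;> linarith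
    _ ≤ 2 * (γ * ‖W‖) := by nlinarith [norm_nonneg W]
  refine ⟨polarUnitary (1 + X), mem_unitary_of_star_mul_self_of_norm_sub_one_lt
    (star_polarUnitary_mul_self hG_half) (by linarith), hU_norm, ?_⟩
  exact fun k ↦ commute_star_polarUnitary_mul_mul (hG k)
    ((commute_sum_smul hP.toOrthogonalIdempotents _ k).add_right (hB k)) hΩ

end BlockDiagonalization

section Exponentials

variable {𝒜 : Type*} [CStarAlgebra 𝒜]

lemma norm_sub_star_mul_mul_le {U : 𝒜} (hU : U ∈ unitary 𝒜) (E : 𝒜) :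
    ‖E - star U * E * U‖ ≤ 2 * ‖U - 1‖ * ‖E‖ := calc
  ‖E - star U * E * U‖ = ‖star U * ((U - 1) * E - E * (U - 1))‖ := by
    rw [show star U * ((U - 1) * E - E * (U - 1)) = star U * U * E - star U * E * U by
      noncomm_ring, Unitary.star_mul_self_of_mem hU, one_mul]
  _ = ‖(U - 1) * E - E * (U - 1)‖ := CStarRing.norm_mem_unitary_mul _ (Unitary.star_mem hU)
  _ ≤ ‖U - 1‖ * ‖E‖ + ‖E‖ * ‖U - 1‖ :=
    norm_sub_le_of_le (norm_mul_le _ _) (norm_mul_le _ _)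
  _ = 2 * ‖U - 1‖ * ‖E‖ := by ring

lemma exp_star_mul_mul {U : 𝒜} (hU : U ∈ unitary 𝒜) (a : 𝒜) :
    NormedSpace.exp (star U * a * U) = star U * NormedSpace.exp a * U := by
  let _ : NormedAlgebra ℚ 𝒜 := NormedAlgebra.restrictScalars ℚ ℂ 𝒜
  exact NormedSpace.exp_units_conj' (Unitary.toUnits ⟨U, hU⟩) a

lemma exp_neg_I_mul_smul_mem_unitary {a : 𝒜} (ha : IsSelfAdjoint a) (t : ℝ) :
    NormedSpace.exp (-(Complex.I * t) • a) ∈ unitary 𝒜 := by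
  let _ : NormedAlgebra ℚ 𝒜 := NormedAlgebra.restrictScalars ℚ ℂ 𝒜
  exact NormedSpace.exp_mem_unitary_of_mem_skewAdjoint
    (ha.smul_mem_skewAdjoint (by simp [skewAdjoint.mem_iff]))

lemma norm_exp_sub_exp_star_mul_mul_le {a U : 𝒜} (ha : IsSelfAdjoint a) (hU : U ∈ unitary 𝒜)
    (t : ℝ) :
    ‖NormedSpace.exp (-(Complex.I * t) • a) -
      NormedSpace.exp (-(Complex.I * t) • (star U * a * U))‖ ≤ 2 * ‖U - 1‖ := by
  nontriviality 𝒜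
  have norm_exp := CStarRing.norm_of_mem_unitary (exp_neg_I_mul_smul_mem_unitary ha t)
  rw [← smul_mul_assoc, ← mul_smul_comm, exp_star_mul_mul hU]
  simpa only [norm_exp, mul_one] using
    norm_sub_star_mul_mul_le hU (NormedSpace.exp (-(Complex.I * t) • a))

variable {ι : Type*} [Fintype ι] {P : ι → 𝒜} {h : ι → ℝ} {η : ℝ} {W : 𝒜}

theorem exists_commute_norm_exp_sub_exp_le (hP : CompleteOrthogonalIdempotents P)
    (hsa : ∀ k, IsSelfAdjoint (P k)) (hη : 0 < η) (hgap : Pairwise fun k l ↦ η ≤ |h k - h l|)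
    (hW : IsSelfAdjoint W) (hWη : Real.pi / (√3 * η) * ‖W‖ ≤ 1 / 8) :
    ∃ Q : 𝒜, IsSelfAdjoint Q ∧ Commute Q (∑ k, (h k : ℂ) • P k) ∧ ∀ t : ℝ,
      ‖NormedSpace.exp (-(Complex.I * t) • (∑ k, (h k : ℂ) • P k + W)) -
        NormedSpace.exp (-(Complex.I * t) • Q)‖ ≤ 4 * (Real.pi / (√3 * η) * ‖W‖) := by
  have hh : Function.Injective h := fun k l hkl ↦ by
    by_contra hne
    simpa [hkl, hη.not_ge] using hgap hne
  obtain ⟨U, hU, hU_norm, hU_comm⟩ := exists_unitary_commute_conj hP hsa hh (by positivity)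
    (norm_commutatorInverse_le hP hsa hη hgap) hW hWη
  have hHW := (isSelfAdjoint_sum_ofReal_smul hsa h).add hW
  refine ⟨_, hHW.conjugate' U, .sum_right _ _ _ fun k _ ↦ (hU_comm k).symm.smul_right _,
    fun t ↦ ?_⟩
  exact (norm_exp_sub_exp_star_mul_mul_le hHW hU t).trans (by linarith)

lemma exists_commute_norm_exp_sub_exp_smul_le (hP : CompleteOrthogonalIdempotents P)
    (hsa : ∀ k, IsSelfAdjoint (P k)) (hη : 0 < η) (hgap : Pairwise fun k l ↦ η ≤ |h k - h l|)
    (hW : IsSelfAdjoint W) {ε : ℝ} (hε : Real.pi / (√3 * η) * (|ε| * ‖W‖) ≤ 1 / 8) :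
    ∃ Z : 𝒜, IsSelfAdjoint Z ∧ Commute Z (∑ k, (h k : ℂ) • P k) ∧ ∀ t : ℝ,
      ‖NormedSpace.exp (-(Complex.I * t) • (∑ k, (h k : ℂ) • P k + (ε : ℂ) • W)) -
        NormedSpace.exp (-(Complex.I * t) • (∑ k, (h k : ℂ) • P k + (ε : ℂ) • Z))‖ ≤
          4 * (Real.pi / (√3 * η) * (|ε| * ‖W‖)) := by
  set H := ∑ k, (h k : ℂ) • P k
  rcases eq_or_ne ε 0 with rfl | hε0
  · exact ⟨0, .zero _, .zero_left _, by simp⟩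
  have norm_smul_W : ‖(ε : ℂ) • W‖ = |ε| * ‖W‖ := by
    rw [norm_smul, Complex.norm_real, Real.norm_eq_abs]
  have hεW : IsSelfAdjoint ((ε : ℂ) • W) := .smul (Complex.conj_ofReal ε) hW
  rw [← norm_smul_W] at hε ⊢
  obtain ⟨Q, hQ, hQ_comm, hQ_exp⟩ :=
    exists_commute_norm_exp_sub_exp_le hP hsa hη hgap hεW hε
  have add_smul_eq : H + (ε : ℂ) • (ε : ℂ)⁻¹ • (Q - H) = Q := by
    rw [smul_inv_smul₀ (Complex.ofReal_ne_zero.2 hε0), add_sub_cancel]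
  refine ⟨(ε : ℂ)⁻¹ • (Q - H), .smul ?_ (hQ.sub (isSelfAdjoint_sum_ofReal_smul hsa h)),
    (hQ_comm.sub_left (.refl H)).smul_left _, fun t ↦ ?_⟩
  · rw [← Complex.ofReal_inv]
    exact Complex.conj_ofReal _
  · rw [add_smul_eq]
    exact hQ_exp t

end Exponentials

section Constants

lemma two_le_of_add_one_mul_exp_sub_one_le {α : ℝ} (hα : 0 < α)
    (h : (α + 1) * (Real.exp (2 / α) - 1) ≤ 3) : 2 ≤ α := by
  have two_div_le : (α + 1) * (2 / α) ≤ 3 := by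
    refine le_trans ?_ h
    gcongr
    linarith [Real.add_one_le_exp (2 / α)]
  rw [mul_div_assoc', div_le_iff₀ hα] at two_div_le
  linarith

lemma four_pi_div_sqrt_three_le {α : ℝ} (hα : 0 < α) :
    4 * Real.pi / √3 ≤ 16 * Real.pi * α / √3 * (Real.exp (1 / (2 * α)) - 1) / 2 := calc
  4 * Real.pi / √3 = 16 * Real.pi * α / √3 * (1 / (2 * α)) / 2 := by field_simp; norm_num
  _ ≤ _ := by gcongr; linarith [Real.add_one_le_exp (1 / (2 * α))]

end Constants

theorem stmt_1_general {𝒜 ι : Type*} [CStarAlgebra 𝒜] [Fintype ι] {P : ι → 𝒜} {h : ι → ℝ}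
    (hP : CompleteOrthogonalIdempotents P) (hsa : ∀ k, IsSelfAdjoint (P k))
    {η : ℝ} (hη : 0 < η) (hgap : Pairwise fun k l ↦ η ≤ |h k - h l|)
    {H : 𝒜} (hH : H = ∑ k, (h k : ℂ) • P k)
    {S : Set ℝ} (hS : ∀ ε ∈ S, 0 ≤ ε) {V : ℝ → 𝒜} (hVsa : ∀ ε ∈ S, IsSelfAdjoint (V ε))
    {v : ℝ} (hv : 0 < v) (hVbd : ∀ ε ∈ S, ‖V ε‖ ≤ v) {α β ρ : ℝ} (hα : 2 ≤ α)
    (hβ : β = 16 * Real.pi * α / √3 * (Real.exp (1 / (2 * α)) - 1))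
    (hρ : ρ = 4 * Real.pi * α / √3) :
    ∃ Vhat : ℝ → 𝒜, (∀ ε, IsSelfAdjoint (Vhat ε) ∧ Commute (Vhat ε) H) ∧
      ∀ ε ∈ S, ε ≤ η / (v * ρ) → ∀ t : ℝ,
        ‖NormedSpace.exp (-(Complex.I * t) • (H + (ε : ℂ) • V ε)) -
            NormedSpace.exp (-(Complex.I * t) • (H + (ε : ℂ) • Vhat ε))‖ ≤
          β / 2 * (v / η) * ε := by
  suffices approx : ∀ ε, ∃ Z : 𝒜, (IsSelfAdjoint Z ∧ Commute Z H) ∧ (ε ∈ S → ε ≤ η / (v * ρ) →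
      ∀ t : ℝ, ‖NormedSpace.exp (-(Complex.I * t) • (H + (ε : ℂ) • V ε)) -
        NormedSpace.exp (-(Complex.I * t) • (H + (ε : ℂ) • Z))‖ ≤ β / 2 * (v / η) * ε) by
    choose Vhat hVhat hbound using approx
    exact ⟨Vhat, hVhat, hbound⟩
  intro ε
  by_cases hε : ε ∈ S ∧ ε ≤ η / (v * ρ)
  swap
  · exact ⟨0, ⟨.zero _, .zero_left _⟩, fun hεS hερ ↦ (hε ⟨hεS, hερ⟩).elim⟩
  obtain ⟨hεS, hερ⟩ := hε
  have hε0 := hS ε hεS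
  have norm_le : |ε| * ‖V ε‖ ≤ ε * v := by
    rw [abs_of_nonneg hε0]
    gcongr
    exact hVbd ε hεS
  have small : Real.pi / (√3 * η) * (|ε| * ‖V ε‖) ≤ 1 / 8 := calc
    _ ≤ Real.pi / (√3 * η) * (ε * v) := by gcongr
    _ ≤ Real.pi / (√3 * η) * (η / (v * ρ) * v) := by gcongr
    _ = 1 / (4 * α) := by rw [hρ]; field_simp
    _ ≤ 1 / 8 := by gcongr; linarith
  obtain ⟨Z, hZ, hZ_comm, hZ_exp⟩ :=
    exists_commute_norm_exp_sub_exp_smul_le hP hsa hη hgap (hVsa ε hεS) small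
  subst hH
  refine ⟨Z, ⟨hZ, hZ_comm⟩, fun _ _ t ↦ (hZ_exp t).trans ?_⟩
  calc 4 * (Real.pi / (√3 * η) * (|ε| * ‖V ε‖))
      ≤ 4 * (Real.pi / (√3 * η) * (ε * v)) := by gcongr
    _ = 4 * Real.pi / √3 * (v / η) * ε := by field_simp
    _ ≤ β / 2 * (v / η) * ε := by
      have hβ_le : 4 * Real.pi / √3 ≤ β / 2 :=
        hβ ▸ four_pi_div_sqrt_three_le (zero_lt_two.trans_le hα)
      gcongr ?_ * (v / η) * ε

/-- Eternal block-diagonal approximation. Let `H = Σ_{k=1}^d h_k P_k`. Then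
there exists a family of bounded self-adjoint operators `V̂(ε)`, `ε ∈ [0,1]`,
each commuting with `H`, such that for every `ε ∈ [0,1]` with `ε ≤ η/(vρ)` and
every `t ∈ ℝ`,
`‖e^{−it(H+εV(ε))} − e^{−it(H+εV̂(ε))}‖ ≤ (β/2)(v/η) ε`. -/
theorem stmt_1 {ℋ : Type*} [NormedAddCommGroup ℋ] [InnerProductSpace ℂ ℋ]
    [CompleteSpace ℋ]
    (d : ℕ) (P : Fin d → ℋ →L[ℂ] ℋ) (h : Fin d → ℝ)
    (hPsa : ∀ k, IsSelfAdjoint (P k))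
    (hPidem : ∀ k, P k * P k = P k)
    (hPorth : ∀ k l, k ≠ l → P k * P l = 0)
    (hPsum : ∑ k, P k = 1)
    (hmono : StrictMono h)
    (η : ℝ) (hη : 0 < η)
    (hgap : ∀ k l, k ≠ l → η ≤ |h k - h l|)
    (H : ℋ →L[ℂ] ℋ) (hH : H = ∑ k, ((h k : ℂ)) • P k)
    (V : ℝ → ℋ →L[ℂ] ℋ)
    (hVsa : ∀ ε ∈ Set.Icc (0 : ℝ) 1, IsSelfAdjoint (V ε))
    (v : ℝ) (hv : 0 < v)
    (hVbd : ∀ ε ∈ Set.Icc (0 : ℝ) 1, ‖V ε‖ ≤ v)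
    (α β ρ : ℝ) (hα : 0 < α)
    (hαeq : (α + 1) * (Real.exp (2 / α) - 1) ≤ 3)
    (hβ : β = 16 * Real.pi * α / Real.sqrt 3 * (Real.exp (1 / (2 * α)) - 1))
    (hρ : ρ = 4 * Real.pi * α / Real.sqrt 3) :
    ∃ Vhat : ℝ → ℋ →L[ℂ] ℋ,
      (∀ ε ∈ Set.Icc (0 : ℝ) 1,
        IsSelfAdjoint (Vhat ε) ∧ Vhat ε * H = H * Vhat ε) ∧
      ∀ ε ∈ Set.Icc (0 : ℝ) 1, ε ≤ η / (v * ρ) → ∀ t : ℝ,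
        ‖NormedSpace.exp ((-(Complex.I * t)) • (H + (ε : ℂ) • V ε)) -
            NormedSpace.exp ((-(Complex.I * t)) • (H + (ε : ℂ) • Vhat ε))‖ ≤
          β / 2 * (v / η) * ε := by
  obtain ⟨Vhat, hVhat, hbound⟩ := stmt_1_general ⟨⟨hPidem, hPorth⟩, hPsum⟩ hPsa hη hgap hH
    (fun _ hε ↦ hε.1) hVsa hv hVbd (two_le_of_add_one_mul_exp_sub_one_le hα hαeq) hβ hρ
  exact ⟨Vhat, fun ε _ ↦ hVhat ε, hbound⟩
end

section
/- Let η > 0 and let h : ℕ → ℝ satisfy h(k+1) − h(k) ≥ η for all k. Then for every k, the family (1/(h(k) − h(ℓ))²)_{ℓ ≠ k} is summable and Σ_{ℓ ≠ k} 1/(h(k) − h(ℓ))² ≤ π²/(3η²). -/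
/-!
After translating `x k` to `0` and dividing by `η`, the other points lie outside `(-1, 1)` and are
`1`-separated. Rounding them towards zero is then an injection into `ℤ \ {0}` which does not
increase absolute values, so the sum of inverse squares is at most `∑ n ≠ 0, 1 / n² = 2 ζ(2)`.
-/

open Real

section Truncation

variable {R : Type*} [Ring R] [LinearOrder R] [FloorRing R]

/-- The integer part of `t` rounded towards zero. Unlike the floor, it does not increase absolute
values, which is what makes inverse squares comparable. -/
def truncToInt (t : R) : ℤ := if 0 ≤ t then ⌊t⌋ else ⌈t⌉

theorem truncToInt_of_nonneg {t : R} (ht : 0 ≤ t) : truncToInt t = ⌊t⌋ := if_pos ht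

theorem truncToInt_of_neg {t : R} (ht : t < 0) : truncToInt t = ⌈t⌉ := if_neg ht.not_ge

theorem truncToInt_pos_iff {t : R} : 0 < truncToInt t ↔ 1 ≤ t := by
  rcases le_or_gt 0 t with ht | ht
  · rw [truncToInt_of_nonneg ht, Int.floor_pos]
  · rw [truncToInt_of_neg ht, Int.ceil_pos]
    exact iff_of_false ht.not_gt (ht.trans one_pos).not_ge

variable [IsStrictOrderedRing R]

theorem abs_truncToInt_le (t : R) : |(truncToInt t : R)| ≤ |t| := by
  rcases le_or_gt 0 t with ht | ht
  · have floor_nonneg : (0 : R) ≤ ⌊t⌋ := mod_cast Int.floor_nonneg.2 ht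
    rw [truncToInt_of_nonneg ht, abs_of_nonneg floor_nonneg, abs_of_nonneg ht]
    exact Int.floor_le t
  · have ceil_nonpos : (⌈t⌉ : R) ≤ 0 := mod_cast Int.ceil_le.2 (by simpa using ht.le)
    rw [truncToInt_of_neg ht, abs_of_nonpos ceil_nonpos, abs_of_neg ht]
    exact neg_le_neg (Int.le_ceil t)

theorem truncToInt_ne_zero {t : R} (ht : 1 ≤ |t|) : truncToInt t ≠ 0 := by
  rcases le_abs'.1 ht with ht | ht
  · have ceil_le : ⌈t⌉ ≤ -1 := Int.ceil_le.2 (by simpa using ht)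
    rw [truncToInt_of_neg (ht.trans_lt neg_one_lt_zero)]
    lia
  · exact (truncToInt_pos_iff.2 ht).ne'

theorem abs_sub_lt_one_of_truncToInt_eq {s t : R} (hs : 1 ≤ |s|) (ht : 1 ≤ |t|)
    (hst : truncToInt s = truncToInt t) : |s - t| < 1 := by
  have one_le_iff : 1 ≤ s ↔ 1 ≤ t := by rw [← truncToInt_pos_iff, hst, truncToInt_pos_iff]
  by_cases hs_one : 1 ≤ s
  · rw [truncToInt_of_nonneg (zero_le_one.trans hs_one),
      truncToInt_of_nonneg (zero_le_one.trans (one_le_iff.1 hs_one))] at hst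
    exact Int.abs_sub_lt_one_of_floor_eq_floor hst
  · have hs_neg : s ≤ -1 := (le_abs'.1 hs).resolve_right hs_one
    have ht_neg : t ≤ -1 := (le_abs'.1 ht).resolve_right (mt one_le_iff.2 hs_one)
    rw [truncToInt_of_neg (hs_neg.trans_lt neg_one_lt_zero),
      truncToInt_of_neg (ht_neg.trans_lt neg_one_lt_zero)] at hst
    have floor_neg_eq : ⌊-s⌋ = ⌊-t⌋ := by rw [Int.floor_neg, Int.floor_neg, hst]
    rw [abs_sub_comm, ← neg_sub_neg]
    exact Int.abs_sub_lt_one_of_floor_eq_floor floor_neg_eq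

end Truncation

/-- The term at `0` is `1 / 0 = 0`. -/
theorem hasSum_one_div_int_sq : HasSum (fun n : ℤ => 1 / (n : ℝ) ^ 2) (π ^ 2 / 3) := by
  have hsum : HasSum (fun n : ℤ => 1 / (n : ℝ) ^ 2)
      (π ^ 2 / 6 + π ^ 2 / 6 - 1 / ((0 : ℤ) : ℝ) ^ 2) :=
    .of_nat_of_neg (by simpa using hasSum_zeta_two) (by simpa using hasSum_zeta_two)
  convert hsum using 1
  norm_num
  ring

section Separated

variable {ι : Type*}

theorem summable_and_tsum_one_div_sq_le_of_one_le_abs {y : ι → ℝ} (hy : ∀ i, 1 ≤ |y i|)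
    (hsep : Pairwise fun i j => 1 ≤ |y i - y j|) :
    Summable (fun i => 1 / y i ^ 2) ∧ ∑' i, 1 / y i ^ 2 ≤ π ^ 2 / 3 := by
  have trunc_injective : Function.Injective fun i => truncToInt (y i) := fun i j hij =>
    hsep.eq (abs_sub_lt_one_of_truncToInt_eq (hy i) (hy j) hij).not_ge
  have term_le (i : ι) : 1 / y i ^ 2 ≤ 1 / (truncToInt (y i) : ℝ) ^ 2 := by
    have trunc_ne_zero : (truncToInt (y i) : ℝ) ≠ 0 := mod_cast truncToInt_ne_zero (hy i)
    exact one_div_le_one_div_of_le (by positivity) (sq_le_sq.2 (abs_truncToInt_le (y i)))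
  have hsum : Summable fun i => 1 / y i ^ 2 :=
    .of_nonneg_of_le (fun _ => by positivity) term_le
      (hasSum_one_div_int_sq.summable.comp_injective trunc_injective)
  exact ⟨hsum, hasSum_le_inj _ trunc_injective (fun _ _ => by positivity) term_le hsum.hasSum
    hasSum_one_div_int_sq⟩

theorem stmt_7_general {η : ℝ} (hη : 0 < η) {x : ι → ℝ}
    (hsep : Pairwise fun i j => η ≤ |x i - x j|) (k : ι) :
    Summable (fun i : {i : ι // i ≠ k} => 1 / (x k - x i) ^ 2) ∧
    ∑' i : {i : ι // i ≠ k}, 1 / (x k - x i) ^ 2 ≤ π ^ 2 / (3 * η ^ 2) := by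
  let y (i : {i : ι // i ≠ k}) : ℝ := (x k - x i) / η
  have one_le_abs_y (i) : 1 ≤ |y i| := by
    rw [abs_div, abs_of_pos hη, one_le_div hη]
    exact hsep i.2.symm
  have one_le_abs_y_sub : Pairwise fun i j => 1 ≤ |y i - y j| := by
    intro i j hij
    rw [← sub_div, sub_sub_sub_cancel_left, abs_div, abs_of_pos hη, one_le_div hη]
    exact hsep (Subtype.coe_ne_coe.2 hij.symm)
  have term_eq (i : {i : ι // i ≠ k}) : 1 / (x k - x i) ^ 2 = 1 / η ^ 2 * (1 / y i ^ 2) := by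
    rw [one_div_mul_one_div, ← mul_pow, mul_div_cancel₀ _ hη.ne']
  obtain ⟨hsum, hle⟩ := summable_and_tsum_one_div_sq_le_of_one_le_abs one_le_abs_y one_le_abs_y_sub
  simp only [term_eq, tsum_mul_left]
  refine ⟨hsum.mul_left _, ?_⟩
  calc 1 / η ^ 2 * ∑' i, 1 / y i ^ 2 ≤ 1 / η ^ 2 * (π ^ 2 / 3) := by gcongr
    _ = π ^ 2 / (3 * η ^ 2) := by field_simp

end Separated

theorem pairwise_le_abs_sub_of_le_succ_sub {G : Type*} [AddCommGroup G] [LinearOrder G]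
    [IsOrderedAddMonoid G] {η : G} (hη : 0 ≤ η) {h : ℕ → G}
    (hgap : ∀ k, η ≤ h (k + 1) - h k) : Pairwise fun i j => η ≤ |h i - h j| := by
  have h_mono : Monotone h := monotone_nat_of_le_succ fun k => sub_nonneg.1 (hη.trans (hgap k))
  have le_sub_of_lt {i j : ℕ} (hij : i < j) : η ≤ h j - h i :=
    (hgap i).trans (sub_le_sub_right (h_mono hij) _)
  intro i j hij
  rcases hij.lt_or_gt with hlt | hgt
  · exact abs_sub_comm (h j) (h i) ▸ (le_sub_of_lt hlt).trans (le_abs_self _)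
  · exact (le_sub_of_lt hgt).trans (le_abs_self _)

/-- Let `η > 0` and let `h : ℕ → ℝ` satisfy `h (k+1) − h k ≥ η` for all `k`.
Then for every `k`, the family `(1/(h k − h ℓ)²)_{ℓ ≠ k}` is summable and
`Σ_{ℓ ≠ k} 1/(h k − h ℓ)² ≤ π²/(3η²)`. -/
theorem stmt_7 (η : ℝ) (hη : 0 < η) (h : ℕ → ℝ)
    (hgap : ∀ k : ℕ, η ≤ h (k + 1) - h k) (k : ℕ) :
    Summable (fun ℓ : {ℓ : ℕ // ℓ ≠ k} => 1 / (h k - h ℓ) ^ 2) ∧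
    ∑' ℓ : {ℓ : ℕ // ℓ ≠ k}, 1 / (h k - h ℓ) ^ 2 ≤ Real.pi ^ 2 / (3 * η ^ 2) :=
  stmt_7_general hη (pairwise_le_abs_sub_of_le_succ_sub hη.le hgap) k
end

section
/- For every real α > 0 and every real x with 0 ≤ x ≤ 1, one has exp((1 − √(1 − x))/(2α)) − 1 ≤ x/(4α) + c x², where c = e^{1/(2α)} − 1 − 1/(4α). (Quadratic upper bound for f_α(x) = exp((1 − √(1 − x))/(2α)) − 1.) -/
/-!
Write `k = 1 / (2α)` and `u = 1 - √(1 - x)`, so that `u ≤ 1`. The Taylor formula is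
`exp t - 1 - t = t ^ 2 * ∫ s in 0..1, (1 - s) * exp (t * s)`, and the integral is increasing in
`t`; comparing its values at `t = k * u` and `t = k` gives
`exp (k * u) - 1 ≤ k * u + u ^ 2 * (exp k - 1 - k)`.
The bounds `u ≤ (x + x ^ 2) / 2` and `u ^ 2 ≤ x ^ 2` then bound the right-hand side by
`k * x / 2 + (exp k - 1 - k / 2) * x ^ 2`.
-/

open Real

theorem exp_sub_one_sub_eq_sq_mul_integral (t : ℝ) :
    exp t - 1 - t = t ^ 2 * ∫ s in (0 : ℝ)..1, (1 - s) * exp (t * s) := by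
  have hderiv (s : ℝ) :
      HasDerivAt (fun s ↦ (t * (1 - s) + 1) * exp (t * s)) (t ^ 2 * ((1 - s) * exp (t * s))) s := by
    have hlin : HasDerivAt (fun s ↦ t * (1 - s) + 1) (-t) s := by
      simpa using (((hasDerivAt_id s).const_sub 1).const_mul t).add_const 1
    have hexp : HasDerivAt (fun s ↦ exp (t * s)) (exp (t * s) * t) s := by
      simpa using ((hasDerivAt_id s).const_mul t).exp
    exact (hlin.mul hexp).congr_deriv (by ring)
  rw [← intervalIntegral.integral_const_mul,
    intervalIntegral.integral_eq_sub_of_hasDerivAt (fun s _ ↦ hderiv s)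
      (Continuous.intervalIntegrable (by fun_prop) 0 1)]
  simp only [sub_self, mul_zero, zero_add, mul_one, one_mul, sub_zero, exp_zero]
  ring

theorem monotone_integral_one_sub_mul_exp :
    Monotone fun t : ℝ ↦ ∫ s in (0 : ℝ)..1, (1 - s) * exp (t * s) := by
  intro a b hab
  refine intervalIntegral.integral_mono_on zero_le_one
    (Continuous.intervalIntegrable (by fun_prop) 0 1)
    (Continuous.intervalIntegrable (by fun_prop) 0 1) fun s ⟨hs0, hs1⟩ ↦ ?_
  have : 0 ≤ 1 - s := sub_nonneg.2 hs1
  gcongr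

theorem exp_mul_sub_one_sub_le {k u : ℝ} (hk : 0 ≤ k) (hu : u ≤ 1) :
    exp (k * u) - 1 - k * u ≤ u ^ 2 * (exp k - 1 - k) := by
  have hku : k * u ≤ k := mul_le_of_le_one_right hk hu
  calc exp (k * u) - 1 - k * u
      = (k * u) ^ 2 * ∫ s in (0 : ℝ)..1, (1 - s) * exp (k * u * s) :=
        exp_sub_one_sub_eq_sq_mul_integral _
    _ ≤ (k * u) ^ 2 * ∫ s in (0 : ℝ)..1, (1 - s) * exp (k * s) :=
        mul_le_mul_of_nonneg_left (monotone_integral_one_sub_mul_exp hku) (sq_nonneg _)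
    _ = u ^ 2 * (exp k - 1 - k) := by
        rw [exp_sub_one_sub_eq_sq_mul_integral k]
        ring

theorem one_sub_sqrt_one_sub_le {x : ℝ} (hx : x ≤ 1) : 1 - √(1 - x) ≤ (x + x ^ 2) / 2 := by
  obtain ⟨r, hr⟩ : ∃ r, r = √(1 - x) := ⟨_, rfl⟩
  have hr0 : 0 ≤ r := hr ▸ sqrt_nonneg _
  have hxr : x = 1 - r ^ 2 := by rw [hr, sq_sqrt (sub_nonneg.2 hx)]; ring
  have hfactor : (x + x ^ 2) / 2 - (1 - r) = r * (r + 2) * (1 - r) ^ 2 / 2 := by rw [hxr]; ring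
  rw [← hr, ← sub_nonneg, hfactor]
  positivity

theorem one_sub_sqrt_one_sub_sq_le {x : ℝ} (hx : x ≤ 1) : (1 - √(1 - x)) ^ 2 ≤ x ^ 2 := by
  have hfactor : (1 - √(1 - x)) * (1 + √(1 - x)) = x := by
    linear_combination -sq_sqrt (sub_nonneg.2 hx)
  have hone : 1 ≤ (1 + √(1 - x)) ^ 2 := one_le_pow₀ (le_add_of_nonneg_right (sqrt_nonneg _))
  calc (1 - √(1 - x)) ^ 2
      ≤ (1 - √(1 - x)) ^ 2 * (1 + √(1 - x)) ^ 2 := le_mul_of_one_le_right (sq_nonneg _) hone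
    _ = x ^ 2 := by rw [← mul_pow, hfactor]

theorem stmt_16_general {α x : ℝ} (hα : 0 < α) (hx : x ≤ 1) :
    exp ((1 - √(1 - x)) / (2 * α)) - 1 ≤
      x / (4 * α) + (exp (1 / (2 * α)) - 1 - 1 / (4 * α)) * x ^ 2 := by
  set k := 1 / (2 * α) with hk
  set u := 1 - √(1 - x)
  have hk0 : 0 ≤ k := by positivity
  have hquarter : 1 / (4 * α) = k / 2 := by rw [hk]; ring
  have hrem : 0 ≤ exp k - 1 - k := by linarith [add_one_le_exp k]
  calc exp (u / (2 * α)) - 1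
      = k * u + (exp (k * u) - 1 - k * u) := by rw [hk, one_div_mul_eq_div]; ring
    _ ≤ k * u + u ^ 2 * (exp k - 1 - k) := by
        gcongr
        exact exp_mul_sub_one_sub_le hk0 (sub_le_self 1 (sqrt_nonneg _))
    _ ≤ k * ((x + x ^ 2) / 2) + x ^ 2 * (exp k - 1 - k) := by
        gcongr ?_ * ?_ + ?_ * ?_
        · exact one_sub_sqrt_one_sub_le hx
        · exact one_sub_sqrt_one_sub_sq_le hx
    _ = x / (4 * α) + (exp k - 1 - 1 / (4 * α)) * x ^ 2 := by
        rw [div_eq_mul_one_div x, hquarter]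
        ring

/-- For every real `α > 0` and every real `x` with `0 ≤ x ≤ 1`, one has
`exp((1 − √(1 − x))/(2α)) − 1 ≤ x/(4α) + c x²`, where
`c = e^{1/(2α)} − 1 − 1/(4α)`. -/
theorem stmt_16 (α : ℝ) (hα : 0 < α) (x : ℝ) (hx0 : 0 ≤ x) (hx1 : x ≤ 1) :
    Real.exp ((1 - Real.sqrt (1 - x)) / (2 * α)) - 1 ≤
      x / (4 * α) + (Real.exp (1 / (2 * α)) - 1 - 1 / (4 * α)) * x ^ 2 :=
  stmt_16_general hα hx1
end
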